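/- Let d ≥ 1, a ≥ 0 and 2 ≤ r ≤ ∞. There exists C = C(d,a,r) > 0 such that for every t ≠ 0 and every F ∈ 𝒮(ℝ^{d+1}_+), the function 𝕊_a(t)F(X) := ∫_{ℝ^{d+1}_+} 𝕊_a(X,Y,t) F(Y) dω_a(Y) satisfies the dispersive estimate ‖𝕊_a(t)F‖_{L^r_a(ℝ^{d+1}_+)} ≤ C · |t|^{−(d+a+1)(1/2 − 1/r)} · ‖F‖_{L^{r'}_a(ℝ^{d+1}_+)} (for r = ∞ the left-hand norm is the unweighted essential supremum). -/

import Mathlib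

open MeasureTheory Filter Complex
open scoped ENNReal NNReal Topology

noncomputable section

/-- Bessel function of the first kind of order `ν`, via its power series. -/
def besselJ (ν : ℝ) (x : ℝ) : ℝ :=
  ∑' k : ℕ, ((-1 : ℝ) ^ k / ((k.factorial : ℝ) * Real.Gamma ((k : ℝ) + ν + 1))) *
    (x / 2) ^ (2 * (k : ℝ) + ν)

/-- The half-line Schrödinger–Bessel kernel `S_a(z,ζ,t)`. -/
def SaK (a : ℝ) (z ζ t : ℝ) : ℂ :=
  (Complex.exp (-Complex.I * ((Real.sign t : ℝ) : ℂ) * (((a + 1) * Real.pi / 4 : ℝ) : ℂ)) /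
      (((2 * |t|) ^ ((a + 1) / 2) : ℝ) : ℂ)) *
    (((z * ζ / (2 * |t|)) ^ ((1 - a) / 2) : ℝ) : ℂ) *
    ((besselJ ((a - 1) / 2) (z * ζ / (2 * |t|)) : ℝ) : ℂ) *
    Complex.exp (Complex.I * ((z ^ 2 + ζ ^ 2 : ℝ) : ℂ) / ((4 * t : ℝ) : ℂ))

/-- The boundary kernel `S_a(z,0,t)`. -/
def Sa0 (a : ℝ) (z t : ℝ) : ℂ :=
  ((((2 : ℝ) ^ (-a) / Real.Gamma ((a + 1) / 2) : ℝ)) : ℂ) *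
    Complex.exp (-Complex.I * ((Real.sign t : ℝ) : ℂ) * (((a + 1) * Real.pi / 4 : ℝ) : ℂ)) *
    (((|t| ^ (-((a + 1) / 2)) : ℝ)) : ℂ) *
    Complex.exp (Complex.I * ((z ^ 2 : ℝ) : ℂ) / ((4 * t : ℝ) : ℂ))

/-- The free Schrödinger kernel on `ℝ^d` (principal branch of the power). -/
def Sfree (d : ℕ) (x y : Fin d → ℝ) (t : ℝ) : ℂ :=
  (4 * (Real.pi : ℂ) * Complex.I * (t : ℂ)) ^ (-(d : ℂ) / 2) *
    Complex.exp (Complex.I * ((∑ i, (x i - y i) ^ 2 : ℝ) : ℂ) / ((4 * t : ℝ) : ℂ))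

/-- The full half-space kernel `𝕊_a(X,Y,t) = S_a(z,ζ,t)·S(x,y,t)`. -/
def SK (d : ℕ) (a : ℝ) (X Y : (Fin d → ℝ) × ℝ) (t : ℝ) : ℂ :=
  SaK a X.2 Y.2 t * Sfree d X.1 Y.1 t

/-- The weighted measure `dω_a = z^a dx dz` on the half-space `ℝ^d × (0,∞)`. -/
def ωa (d : ℕ) (a : ℝ) : Measure ((Fin d → ℝ) × ℝ) :=
  (volume : Measure (Fin d → ℝ)).prod
    (((volume : Measure ℝ).restrict (Set.Ioi 0)).withDensity fun z => ENNReal.ofReal (z ^ a))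

/-- The mixed norm `‖Φ‖_{L^q_t L^r_x}`. -/
def mixNorm (d : ℕ) (q r : ℝ) (Φ : (Fin d → ℝ) → ℝ → ℂ) : ℝ≥0∞ :=
  (∫⁻ t : ℝ, (∫⁻ x : Fin d → ℝ, (‖Φ x t‖₊ : ℝ≥0∞) ^ r) ^ (q / r)) ^ (1 / q)

/-- The mixed norm `‖Φ‖_{L^q_T L^r_x}` over the time interval `[0,T]`. -/
def mixNormT (d : ℕ) (T q r : ℝ) (Φ : (Fin d → ℝ) → ℝ → ℂ) : ℝ≥0∞ :=
  (∫⁻ t in Set.Ioc (0 : ℝ) T, (∫⁻ x : Fin d → ℝ, (‖Φ x t‖₊ : ℝ≥0∞) ^ r) ^ (q / r)) ^ (1 / q)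

/-- The homogeneous propagator `𝕋_a^*(u₀)`. -/
def Tstar (d : ℕ) (a : ℝ) (u₀ : (Fin d → ℝ) × ℝ → ℂ) (X : (Fin d → ℝ) × ℝ) (t : ℝ) : ℂ :=
  if t = 0 then u₀ X else ∫ Y, SK d a X Y t * u₀ Y ∂(ωa d a)

/-- The inhomogeneous Duhamel term `𝔻_a(F)`. -/
def Dop (d : ℕ) (a : ℝ) (F : (Fin d → ℝ) × ℝ → ℝ → ℂ) (X : (Fin d → ℝ) × ℝ) (t : ℝ) : ℂ :=
  ∫ τ in (0 : ℝ)..t, ∫ Y, SK d a X Y (t - τ) * F Y τ ∂(ωa d a)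

/-- The boundary-data operator `Θ_a^*(Φ)`. -/
def ThetaStar (d : ℕ) (a : ℝ) (Φ : (Fin d → ℝ) → ℝ → ℂ) (X : (Fin d → ℝ) × ℝ) (t : ℝ) : ℂ :=
  Complex.I *
    ∫ τ in (0 : ℝ)..t, ∫ y : Fin d → ℝ, Sa0 a X.2 (t - τ) * Sfree d X.1 y (t - τ) * Φ y τ

/-- The weight `k(z) = min{1, z^{a/2}}`. -/
def kwt (a z : ℝ) : ℝ := min 1 (z ^ (a / 2))

/-- The weight `k^{-1}(z) = max{1, z^{-a/2}}`. -/
def kinv (a z : ℝ) : ℝ := max 1 (z ^ (-a / 2))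



def Gs (b w : ℝ) : ℝ := ∑' k : ℕ, (-w) ^ k / ((k.factorial : ℝ) * Real.Gamma ((k : ℝ) + b))

lemma gam_pos {b : ℝ} (hb : 0 < b) (k : ℕ) : 0 < Real.Gamma ((k : ℝ) + b) :=
  Real.Gamma_pos_of_pos (by positivity)

lemma gam_succ {b : ℝ} (hb : 0 < b) (k : ℕ) :
    Real.Gamma (((k + 1 : ℕ) : ℝ) + b) = ((k : ℝ) + b) * Real.Gamma ((k : ℝ) + b) := by
  rw [← Real.Gamma_add_one (by positivity)]
  push_cast; ring_nf

lemma gam_shift (b : ℝ) (k : ℕ) :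
    Real.Gamma (((k + 1 : ℕ) : ℝ) + b) = Real.Gamma ((k : ℝ) + (b + 1)) := by
  push_cast; ring_nf

lemma gam_lower {b : ℝ} (hb : 0 < b) : ∃ c > 0, ∀ k : ℕ, c ≤ Real.Gamma ((k : ℝ) + b) := by
  have h1 : ∀ k : ℕ, Real.Gamma (1 + b) ≤ Real.Gamma (((k + 1 : ℕ) : ℝ) + b) := by
    intro k
    induction k with
    | zero => simp
    | succ k ih =>
      rw [gam_succ hb (k + 1)]
      have := gam_pos hb (k + 1)
      have h2 : (1 : ℝ) ≤ ((k + 1 : ℕ) : ℝ) + b := by push_cast; nlinarith [(Nat.cast_nonneg k : (0 : ℝ) ≤ k)]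
      nlinarith
  refine ⟨min (Real.Gamma b) (Real.Gamma (1 + b)), lt_min (Real.Gamma_pos_of_pos hb)
    (Real.Gamma_pos_of_pos (by positivity)), fun k => ?_⟩
  rcases k with _ | k
  · simp
  · exact (min_le_right _ _).trans (h1 k)

lemma Gs_summable {b : ℝ} (hb : 0 < b) (w : ℝ) :
    Summable fun k : ℕ => w ^ k / ((k.factorial : ℝ) * Real.Gamma ((k : ℝ) + b)) := by
  obtain ⟨c, hc, h⟩ := gam_lower hb
  refine Summable.of_norm_bounded (g := fun k : ℕ => |w| ^ k / k.factorial * c⁻¹)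
    ((Real.summable_pow_div_factorial |w|).mul_right _) fun k => ?_
  have hf : (0 : ℝ) < k.factorial := by positivity
  have hg := gam_pos hb k
  rw [Real.norm_eq_abs, abs_div, abs_pow, abs_of_pos (mul_pos hf hg), ← div_div, div_eq_mul_inv _ (Real.Gamma _)]
  gcongr
  exact h k

lemma Gs_hasSum {b : ℝ} (hb : 0 < b) (w : ℝ) :
    HasSum (fun k : ℕ => (-w) ^ k / ((k.factorial : ℝ) * Real.Gamma ((k : ℝ) + b))) (Gs b w) :=
  (Gs_summable hb (-w)).hasSum

lemma Gs_zero (b : ℝ) : Gs b 0 = 1 / Real.Gamma b := by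
  unfold Gs
  rw [tsum_eq_single 0]
  · simp
  · intro k hk; simp [hk]

lemma Gs_rec {b : ℝ} (hb : 0 < b) (w : ℝ) :
    Gs b w = b * Gs (b + 1) w - w * Gs (b + 2) w := by
  have h1 := (Gs_hasSum (b := b + 1) (by positivity) w).mul_left b
  have h2 := (Gs_hasSum (b := b + 2) (by positivity) w).mul_left (-w)
  have h3 : HasSum (fun k : ℕ => (k : ℝ) * ((-w) ^ k / ((k.factorial : ℝ) * Real.Gamma ((k : ℝ) + (b + 1)))))
      (-w * Gs (b + 2) w) := by
    rw [← hasSum_nat_add_iff' 1]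
    simp only [Finset.range_one, Finset.sum_singleton, Nat.cast_zero, zero_mul, sub_zero]
    refine h2.congr_fun ?_ |> fun h => h
    intro k
    have : b + 2 = b + 1 + 1 := by ring
    rw [this, ← gam_shift (b + 1) k, Nat.factorial_succ]
    have hf : (k.factorial : ℝ) ≠ 0 := by positivity
    have hg := (gam_pos (b := b + 1) (by positivity) (k + 1)).ne'
    have : ((k : ℝ) + 1) ≠ 0 := by positivity
    push_cast at hg ⊢
    field_simp
    ring
  have h4 := (h1.add h3).unique (f := fun k : ℕ => b * ((-w) ^ k / ((k.factorial : ℝ) * Real.Gamma ((k : ℝ) + (b + 1)))) + (k : ℝ) * ((-w) ^ k / ((k.factorial : ℝ) * Real.Gamma ((k : ℝ) + (b + 1)))))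
    (a₂ := Gs b w) ?_
  · linarith
  · refine (Gs_hasSum hb w).congr_fun ?_ |> fun h => h
    intro k
    rw [← gam_shift, gam_succ hb]
    have hf : (k.factorial : ℝ) ≠ 0 := by positivity
    have hg := (gam_pos hb k).ne'
    have : (k : ℝ) + b ≠ 0 := by positivity
    field_simp
    ring

lemma Gs_deriv {b : ℝ} (hb : 0 < b) (w : ℝ) : HasDerivAt (Gs b) (-Gs (b + 1) w) w := by
  have key : HasSum (fun k : ℕ => (k : ℝ) * (-w) ^ (k - 1) * (-1) / ((k.factorial : ℝ) * Real.Gamma ((k : ℝ) + b)))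
      (-Gs (b + 1) w) := by
    rw [← hasSum_nat_add_iff' 1]
    simp only [Finset.range_one, Finset.sum_singleton, Nat.cast_zero, zero_mul, sub_zero, zero_div]
    refine (Gs_hasSum (b := b + 1) (by positivity) w).neg.congr_fun ?_ |> fun h => h
    intro k
    rw [← gam_shift b k, Nat.factorial_succ]
    have hf : (k.factorial : ℝ) ≠ 0 := by positivity
    have hg := (gam_pos hb (k + 1)).ne'
    have : ((k : ℝ) + 1) ≠ 0 := by positivity
    push_cast at hg ⊢
    field_simp
  rw [← key.tsum_eq]
  set R : ℝ := |w| + 1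
  have hsum : Summable (fun k : ℕ => (k : ℝ) * R ^ (k - 1) / ((k.factorial : ℝ) * Real.Gamma ((k : ℝ) + b))) := by
    rw [← summable_nat_add_iff 1]
    refine (Gs_summable (b := b + 1) (by positivity) R).congr fun k => ?_
    rw [← gam_shift b k, Nat.factorial_succ]
    have hf : (k.factorial : ℝ) ≠ 0 := by positivity
    have hg := (gam_pos hb (k + 1)).ne'
    have : ((k : ℝ) + 1) ≠ 0 := by positivity
    push_cast at hg ⊢
    field_simp
  refine hasDerivAt_tsum_of_isPreconnected (t := Metric.ball 0 R) hsum Metric.isOpen_ball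
    (convex_ball _ _).isPreconnected
    (g := fun (k : ℕ) (y : ℝ) => (-y) ^ k / ((k.factorial : ℝ) * Real.Gamma ((k : ℝ) + b)))
    (g' := fun (k : ℕ) (y : ℝ) => (k : ℝ) * (-y) ^ (k - 1) * (-1) / ((k.factorial : ℝ) * Real.Gamma ((k : ℝ) + b)))
    (y₀ := 0) ?_ ?_ ?_ (Gs_summable hb _) ?_
  · intro k y _
    have := ((hasDerivAt_id y).neg.pow k).div_const ((k.factorial : ℝ) * Real.Gamma ((k : ℝ) + b))
    simpa using this
  · intro k y hy
    have hy' : |y| ≤ R := by simpa using (Metric.mem_ball.mp hy).le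
    have hf : (0 : ℝ) < k.factorial := by positivity
    have hg := gam_pos hb k
    rw [Real.norm_eq_abs, abs_div, abs_of_pos (mul_pos hf hg)]
    simp only [abs_mul, abs_neg, abs_one, mul_one, abs_pow, Nat.abs_cast]
    gcongr
  · simp [R]; positivity
  · simp [R]

lemma Gs_cont {b : ℝ} (hb : 0 < b) : Continuous (Gs b) :=
  continuous_iff_continuousAt.2 fun w => (Gs_deriv hb w).continuousAt

lemma Gs_bound {b : ℝ} (hb : 1 / 2 ≤ b) {w : ℝ} (hw : 0 ≤ w) : |Gs b w| ≤ 1 / Real.Gamma b := by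
  have hb0 : 0 < b := by linarith
  have hd : ∀ w : ℝ, HasDerivAt (fun w => Gs b w ^ 2 + w * Gs (b + 1) w ^ 2)
      ((1 - 2 * b) * Gs (b + 1) w ^ 2) w := by
    intro w
    have h1 := ((Gs_deriv hb0 w).pow 2).add
      ((hasDerivAt_id w).mul ((Gs_deriv (b := b + 1) (by positivity) w).pow 2))
    refine HasDerivAt.congr_deriv h1 ?_
    have := Gs_rec hb0 w
    have e : b + 1 + 1 = b + 2 := by ring
    rw [e]
    simp only [id, Pi.pow_apply]
    push_cast
    rw [this]; ring
  have hanti : Antitone (fun w => Gs b w ^ 2 + w * Gs (b + 1) w ^ 2) := by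
    refine antitone_of_hasDerivAt_nonpos hd fun w => ?_
    simp only [Pi.zero_apply]
    nlinarith [sq_nonneg (Gs (b + 1) w)]
  have := hanti hw
  simp only [zero_mul, add_zero, Gs_zero b] at this
  have hp : 0 < 1 / Real.Gamma b := by have := Real.Gamma_pos_of_pos hb0; positivity
  refine abs_le_of_sq_le_sq ?_ hp.le
  nlinarith [mul_nonneg hw (sq_nonneg (Gs (b + 1) w))]


lemma vander (j : ℕ) : ∀ (k : ℕ) (b : ℝ), 0 < b →
    Real.Gamma ((j : ℝ) + k + b) / (Real.Gamma ((j : ℝ) + b) * Real.Gamma ((k : ℝ) + b)) =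
      ∑ m ∈ Finset.range (k + 1), (k.choose m : ℝ) * (j.descFactorial m : ℝ) / Real.Gamma ((m : ℝ) + b) := by
  induction j with
  | zero =>
    intro k b hb
    rw [Finset.sum_eq_single 0]
    · have := (gam_pos hb k).ne'
      have := (Real.Gamma_pos_of_pos hb).ne'
      simp
      field_simp
    · intro m _ hm
      obtain ⟨n, rfl⟩ := Nat.exists_eq_succ_of_ne_zero hm
      simp
    · simp
  | succ j ih =>
    intro k b hb
    have hgj := (gam_pos hb j).ne'
    have hgk := (gam_pos hb k).ne'
    have hjb : (j : ℝ) + b ≠ 0 := by positivity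
    have hjkb : (j : ℝ) + k + b ≠ 0 := by positivity
    have e1 : Real.Gamma (((j + 1 : ℕ) : ℝ) + k + b) = ((j : ℝ) + k + b) * Real.Gamma ((j : ℝ) + k + b) := by
      rw [← Real.Gamma_add_one hjkb]; push_cast; ring_nf
    rcases k with _ | k
    · have := ih 0 b hb
      have h0 := (gam_pos hb (j+1)).ne'
      have := (Real.Gamma_pos_of_pos hb).ne'
      simp at h0 ⊢
      field_simp
    · have h1 := ih (k + 1) b hb
      have h2 := ih k (b + 1) (by positivity)
      have hs : ∀ m, ((j+1).descFactorial (m + 1) : ℝ) = j.descFactorial (m + 1) + (m + 1) * j.descFactorial m := by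
        intro m
        rw [Nat.succ_descFactorial_succ, Nat.descFactorial_succ]
        rcases le_or_gt m j with hm | hm
        · push_cast [Nat.cast_sub hm]; ring
        · simp [Nat.descFactorial_eq_zero_iff_lt.2 hm]
      have hc : ∀ m, ((k + 1).choose (m + 1) : ℝ) * (m + 1) = (k + 1) * k.choose m := by
        intro m
        have := Nat.add_one_mul_choose_eq k m
        exact_mod_cast this.symm
      have e3 : ∑ m ∈ Finset.range (k + 1 + 1), ((k + 1).choose m : ℝ) * ((j + 1).descFactorial m : ℝ) / Real.Gamma ((m : ℝ) + b)
          = ∑ m ∈ Finset.range (k + 1 + 1), ((k + 1).choose m : ℝ) * (j.descFactorial m : ℝ) / Real.Gamma ((m : ℝ) + b)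
            + (k + 1) * ∑ m ∈ Finset.range (k + 1), (k.choose m : ℝ) * (j.descFactorial m : ℝ) / Real.Gamma ((m : ℝ) + (b + 1)) := by
        rw [Finset.sum_range_succ', Finset.sum_range_succ' _ (k + 1), Finset.mul_sum, add_right_comm, ← Finset.sum_add_distrib]
        congr 1
        · refine Finset.sum_congr rfl fun m _ => ?_
          rw [hs, ← gam_shift]
          have := hc m
          rw [mul_add, ← mul_assoc, this]
          ring
      rw [e3, ← h1, ← h2, e1, gam_succ hb, ← gam_shift b j, gam_succ hb j, ← gam_shift b k]
      have e4 : (j : ℝ) + k + (b + 1) = j + ((k + 1 : ℕ) : ℝ) + b := by push_cast; ring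
      rw [e4]
      field_simp
      push_cast
      try ring

lemma hasSum_desc (x : ℝ) (m : ℕ) :
    HasSum (fun j : ℕ => x ^ j / (j.factorial : ℝ) * (j.descFactorial m : ℝ)) (x ^ m * Real.exp x) := by
  rw [← hasSum_nat_add_iff' m]
  have h0 : ∑ i ∈ Finset.range m, x ^ i / (i.factorial : ℝ) * (i.descFactorial m : ℝ) = 0 := by
    refine Finset.sum_eq_zero fun i hi => ?_
    rw [Nat.descFactorial_eq_zero_iff_lt.2 (Finset.mem_range.1 hi)]; simp
  rw [h0, sub_zero]
  have h1 : HasSum (fun j : ℕ => x ^ j / (j.factorial : ℝ)) (Real.exp x) := by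
    rw [Real.exp_eq_exp_ℝ]
    exact NormedSpace.expSeries_div_hasSum_exp x
  refine (h1.mul_left (x ^ m)).congr_fun ?_ |> fun h => h
  intro j
  have h2 := Nat.factorial_mul_descFactorial (Nat.le_add_left m j)
  simp only [Nat.add_sub_cancel] at h2
  rw [← h2]
  have hf : (j.factorial : ℝ) ≠ 0 := by positivity
  have hf' : ((j + m).descFactorial m : ℝ) ≠ 0 := by
    have : (j+m).descFactorial m ≠ 0 := by rw [Ne, Nat.descFactorial_eq_zero_iff_lt]; omega
    exact_mod_cast this
  push_cast
  field_simp
  ring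

/-- Kummer type sum. -/
lemma kummer {b : ℝ} (hb : 0 < b) (k : ℕ) (x : ℝ) :
    HasSum (fun j : ℕ => x ^ j / ((j.factorial : ℝ) * Real.Gamma ((j : ℝ) + b)) * Real.Gamma ((j : ℝ) + k + b))
      (Real.Gamma ((k : ℝ) + b) * Real.exp x * ∑ m ∈ Finset.range (k + 1), (k.choose m : ℝ) * x ^ m / Real.Gamma ((m : ℝ) + b)) := by
  have h : HasSum (fun j : ℕ => ∑ m ∈ Finset.range (k + 1),
      (Real.Gamma ((k : ℝ) + b) * (k.choose m : ℝ) / Real.Gamma ((m : ℝ) + b)) * (x ^ j / (j.factorial : ℝ) * (j.descFactorial m : ℝ)))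
      (∑ m ∈ Finset.range (k + 1), (Real.Gamma ((k : ℝ) + b) * (k.choose m : ℝ) / Real.Gamma ((m : ℝ) + b)) * (x ^ m * Real.exp x)) :=
    hasSum_sum fun m _ => (hasSum_desc x m).mul_left _
  convert h using 1
  · funext j
    have := vander j k b hb
    have hgj := (gam_pos hb j).ne'
    have hgk := (gam_pos hb k).ne'
    rw [div_eq_iff (by positivity)] at this
    rw [this, Finset.sum_mul, Finset.mul_sum]
    refine Finset.sum_congr rfl fun m _ => ?_
    field_simp
  · rw [Finset.mul_sum]
    refine Finset.sum_congr rfl fun m _ => ?_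
    ring

/-- double sum -/
lemma dblsum {b : ℝ} (hb : 0 < b) (x y : ℝ) :
    HasSum (fun k : ℕ => (-y) ^ k / (k.factorial : ℝ) * ∑ m ∈ Finset.range (k + 1), (k.choose m : ℝ) * (-x) ^ m / Real.Gamma ((m : ℝ) + b))
      (Real.exp (-y) * Gs b (-(x * y))) := by
  have row : ∀ x y : ℝ, ∀ m : ℕ, HasSum (fun k : ℕ => (y ^ k / (k.factorial : ℝ)) * ((k.choose m : ℝ) * x ^ m / Real.Gamma ((m : ℝ) + b)))
      (Real.exp y * ((x * y) ^ m / ((m.factorial : ℝ) * Real.Gamma ((m : ℝ) + b)))) := by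
    intro x y m
    convert! (hasSum_desc y m).mul_right (x ^ m / ((m.factorial : ℝ) * Real.Gamma ((m : ℝ) + b))) using 1
    · funext k
      rw [Nat.descFactorial_eq_factorial_mul_choose]
      have hf : (m.factorial : ℝ) ≠ 0 := by positivity
      have hgk := (gam_pos hb m).ne'
      push_cast
      field_simp
    · rw [mul_pow]; ring
  have hsumm : Summable (fun p : ℕ × ℕ => ((-y) ^ p.2 / (p.2.factorial : ℝ)) * ((p.2.choose p.1 : ℝ) * (-x) ^ p.1 / Real.Gamma ((p.1 : ℝ) + b))) := by
    rw [← summable_abs_iff]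
    have : (fun p : ℕ × ℕ => |((-y) ^ p.2 / (p.2.factorial : ℝ)) * ((p.2.choose p.1 : ℝ) * (-x) ^ p.1 / Real.Gamma ((p.1 : ℝ) + b))|)
       = (fun p : ℕ × ℕ => (|y| ^ p.2 / (p.2.factorial : ℝ)) * ((p.2.choose p.1 : ℝ) * |x| ^ p.1 / Real.Gamma ((p.1 : ℝ) + b))) := by
      funext p
      simp [abs_mul, abs_div, abs_pow, abs_of_pos (gam_pos hb p.1)]
    rw [this, summable_prod_of_nonneg]
    · refine ⟨fun m => (row |x| |y| m).summable, ?_⟩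
      simp only [(row |x| |y| _).tsum_eq]
      exact (Gs_summable hb _).mul_left _
    · intro p
      have := gam_pos hb p.1
      simp only [Pi.zero_apply]
      positivity
  have h1 := hsumm.hasSum
  have h2 := h1.prod_fiberwise (fun m => row (-x) (-y) m)
  have h3 := (Gs_hasSum hb (-(x * y))).mul_left (Real.exp (-y))
  simp only [neg_neg, neg_mul_neg] at h2 h3
  have h4 := h2.unique h3
  rw [h4] at h1
  have h5 := ((Equiv.prodComm ℕ ℕ).hasSum_iff).2 h1
  refine (h5.prod_fiberwise (g := fun k : ℕ => (-y) ^ k / (k.factorial : ℝ) * ∑ m ∈ Finset.range (k + 1), (k.choose m : ℝ) * (-x) ^ m / Real.Gamma ((m : ℝ) + b)) fun k => ?_)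
  rw [Finset.mul_sum]
  simp only [Function.comp, Equiv.prodComm_apply, Prod.swap]
  refine hasSum_sum_of_ne_finset_zero fun m hm => ?_
  rw [Nat.choose_eq_zero_of_lt (by simpa using hm)]
  simp


lemma gm_int {a b ε : ℝ} (ha : 0 ≤ a) (hb : b = (a + 1) / 2) (hε : 0 < ε) (k : ℕ) :
    ∫ z in Set.Ioi (0 : ℝ), z ^ a * Real.exp (-ε * z ^ 2) * (z ^ 2) ^ k =
      1 / 2 * ε ^ (-b) * ((1 / ε) ^ k * Real.Gamma ((k : ℝ) + b)) := by
  have h := _root_.integral_rpow_mul_exp_neg_mul_rpow (p := 2) (q := a + 2 * k) (b := ε) (by norm_num)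
    (by nlinarith [(Nat.cast_nonneg k : (0 : ℝ) ≤ k)]) hε
  have e1 : (a + 2 * k + 1) / 2 = k + b := by rw [hb]; ring
  have e2 : -(a + 2 * k + 1) / 2 = -b + -(k : ℝ) := by rw [hb]; ring
  rw [e1, e2, Real.rpow_add hε, Real.rpow_neg hε.le (k : ℝ), Real.rpow_natCast] at h
  have h2 : 1 / 2 * ε ^ (-b) * ((1 / ε) ^ k * Real.Gamma ((k : ℝ) + b)) =
      ε ^ (-b) * (ε ^ k)⁻¹ * (1 / 2) * Real.Gamma (↑k + b) := by
    rw [one_div ε, inv_pow]; ring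
  rw [h2, ← h]
  refine setIntegral_congr_fun measurableSet_Ioi fun z hz => ?_
  have hz : 0 < z := hz
  rw [Real.rpow_add hz, Real.rpow_mul hz.le, Real.rpow_natCast]
  norm_num
  ring

lemma gm_integrable {a ε : ℝ} (ha : 0 ≤ a) (hε : 0 < ε) (k : ℕ) :
    IntegrableOn (fun z : ℝ => z ^ a * Real.exp (-ε * z ^ 2) * (z ^ 2) ^ k) (Set.Ioi 0) := by
  by_contra h
  have h1 := integral_undef h
  rw [gm_int ha rfl hε k] at h1
  have := gam_pos (b := (a + 1) / 2) (by positivity) k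
  have : (0 : ℝ) < ε ^ (-((a + 1) / 2)) := by positivity
  have : 0 < 1 / 2 * ε ^ (-((a + 1) / 2)) * ((1 / ε) ^ k * Real.Gamma ((k : ℝ) + (a + 1) / 2)) := by positivity
  linarith

lemma mk_int {a b ε : ℝ} (ha : 0 ≤ a) (hb : b = (a + 1) / 2) (hε : 0 < ε) (k : ℕ) (X : ℝ) :
    ∫ z in Set.Ioi (0 : ℝ), z ^ a * Real.exp (-ε * z ^ 2) * (z ^ 2) ^ k * Gs b (X * z ^ 2) =
      1 / 2 * ε ^ (-b) * (1 / ε) ^ k * (Real.Gamma ((k : ℝ) + b) * Real.exp (-X / ε) *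
        ∑ m ∈ Finset.range (k + 1), (k.choose m : ℝ) * (-X / ε) ^ m / Real.Gamma ((m : ℝ) + b)) := by
  have hb0 : 0 < b := by rw [hb]; positivity
  have hF : ∀ (c : ℝ) (j : ℕ), (fun z : ℝ => z ^ a * Real.exp (-ε * z ^ 2) * (z ^ 2) ^ k *
        ((c * z ^ 2) ^ j / ((j.factorial : ℝ) * Real.Gamma ((j : ℝ) + b)))) = fun z =>
        (c ^ j / ((j.factorial : ℝ) * Real.Gamma ((j : ℝ) + b))) *
          (z ^ a * Real.exp (-ε * z ^ 2) * (z ^ 2) ^ (j + k)) := by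
    intro c j; funext z; rw [mul_pow, pow_add]; ring
  have hI : ∀ (c : ℝ) (j : ℕ), ∫ z in Set.Ioi (0 : ℝ), z ^ a * Real.exp (-ε * z ^ 2) * (z ^ 2) ^ k *
        ((c * z ^ 2) ^ j / ((j.factorial : ℝ) * Real.Gamma ((j : ℝ) + b))) =
        1 / 2 * ε ^ (-b) * (1 / ε) ^ k * ((c / ε) ^ j / ((j.factorial : ℝ) * Real.Gamma ((j : ℝ) + b)) * Real.Gamma ((j : ℝ) + k + b)) := by
    intro c j
    rw [hF, integral_const_mul, gm_int ha hb hε]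
    push_cast
    rw [pow_add, div_pow, div_pow, one_pow]
    ring
  have hsumm := hasSum_integral_of_summable_integral_norm (μ := volume.restrict (Set.Ioi (0 : ℝ)))
    (F := fun (j : ℕ) (z : ℝ) => z ^ a * Real.exp (-ε * z ^ 2) * (z ^ 2) ^ k *
      ((-X * z ^ 2) ^ j / ((j.factorial : ℝ) * Real.Gamma ((j : ℝ) + b))))
    (fun j => by rw [hF]; exact (gm_integrable ha hε _).const_mul _)
    (by
      have := ((kummer hb0 k (|X| / ε)).mul_left (1 / 2 * ε ^ (-b) * (1 / ε) ^ k)).summable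
      refine this.congr fun j => ?_
      rw [← hI]
      refine setIntegral_congr_fun measurableSet_Ioi fun z hz => ?_
      have hz : 0 < z := hz
      have := gam_pos hb0 j
      simp only [norm_mul, norm_div, norm_pow, Real.norm_eq_abs, abs_neg, Real.abs_exp, Nat.abs_cast, abs_of_pos this, abs_of_pos hz, abs_of_pos (Real.rpow_pos_of_pos hz a)])
  simp only [hI] at hsumm
  have h2 := (kummer hb0 k (-X / ε)).mul_left (1 / 2 * ε ^ (-b) * (1 / ε) ^ k)
  rw [h2.unique hsumm]
  refine setIntegral_congr_fun measurableSet_Ioi fun z hz => ?_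
  rw [tsum_mul_left]
  simp [Gs]

lemma weber {a b ε X Y : ℝ} (ha : 0 ≤ a) (hb : b = (a + 1) / 2) (hε : 0 < ε) (hX : 0 ≤ X) :
    ∫ z in Set.Ioi (0 : ℝ), z ^ a * Real.exp (-ε * z ^ 2) * Gs b (X * z ^ 2) * Gs b (Y * z ^ 2) =
      1 / 2 * ε ^ (-b) * Real.exp (-X / ε) * (Real.exp (-Y / ε) * Gs b (-(X * Y / ε ^ 2))) := by
  have hb0 : 0 < b := by rw [hb]; positivity
  have hbh : 1 / 2 ≤ b := by rw [hb]; linarith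
  have hF : ∀ (j : ℕ), (fun z : ℝ => z ^ a * Real.exp (-ε * z ^ 2) * Gs b (X * z ^ 2) *
        ((-Y * z ^ 2) ^ j / ((j.factorial : ℝ) * Real.Gamma ((j : ℝ) + b)))) = fun z =>
        ((-Y) ^ j / ((j.factorial : ℝ) * Real.Gamma ((j : ℝ) + b))) *
          (z ^ a * Real.exp (-ε * z ^ 2) * (z ^ 2) ^ j * Gs b (X * z ^ 2)) := by
    intro j; funext z; rw [mul_pow]; ring
  have hint : ∀ j : ℕ, IntegrableOn (fun z : ℝ => z ^ a * Real.exp (-ε * z ^ 2) * (z ^ 2) ^ j * Gs b (X * z ^ 2)) (Set.Ioi 0) := by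
    intro j
    refine (gm_integrable ha hε j).mul_bdd (c := 1 / Real.Gamma b) ?_ ?_
    · have := Gs_cont hb0
      exact Continuous.aestronglyMeasurable (by fun_prop)
    · exact ae_of_all _ fun z => by
        rw [Real.norm_eq_abs]; exact Gs_bound hbh (by positivity)
  have hI : ∀ (j : ℕ), ∫ z in Set.Ioi (0 : ℝ), z ^ a * Real.exp (-ε * z ^ 2) * Gs b (X * z ^ 2) *
        ((-Y * z ^ 2) ^ j / ((j.factorial : ℝ) * Real.Gamma ((j : ℝ) + b))) =
        1 / 2 * ε ^ (-b) * Real.exp (-X / ε) * ((-(Y / ε)) ^ j / (j.factorial : ℝ) *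
          ∑ m ∈ Finset.range (j + 1), (j.choose m : ℝ) * (-(X / ε)) ^ m / Real.Gamma ((m : ℝ) + b)) := by
    intro j
    rw [hF, integral_const_mul, mk_int ha hb hε]
    have := (gam_pos hb0 j).ne'
    have e : -(Y / ε) = -Y * (1 / ε) := by ring
    have e' : -(X / ε) = -X / ε := by ring
    rw [e, mul_pow, e']
    field_simp
  have hsumm := hasSum_integral_of_summable_integral_norm (μ := volume.restrict (Set.Ioi (0 : ℝ)))
    (F := fun (j : ℕ) (z : ℝ) => z ^ a * Real.exp (-ε * z ^ 2) * Gs b (X * z ^ 2) *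
        ((-Y * z ^ 2) ^ j / ((j.factorial : ℝ) * Real.Gamma ((j : ℝ) + b))))
    (fun j => by rw [hF]; exact (hint _).const_mul _)
    (by
      have hs := ((Real.summable_pow_div_factorial (|Y| / ε)).mul_left (1 / 2 * ε ^ (-b) * (1 / Real.Gamma b)))
      refine Summable.of_nonneg_of_le (fun j => integral_nonneg fun z => norm_nonneg _) (fun j => ?_) hs
      have hg := gam_pos hb0 j
      have e1 : 1 / 2 * ε ^ (-b) * (1 / Real.Gamma b) * ((|Y| / ε) ^ j / (j.factorial : ℝ)) =
         ∫ z in Set.Ioi (0 : ℝ), (|Y| ^ j / ((j.factorial : ℝ) * Real.Gamma ((j : ℝ) + b)) * (1 / Real.Gamma b)) * (z ^ a * Real.exp (-ε * z ^ 2) * (z ^ 2) ^ j) := by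
        rw [integral_const_mul, gm_int ha hb hε]
        rw [div_pow, div_pow, one_pow]
        field_simp
      rw [e1]
      refine setIntegral_mono_on ?_ ((gm_integrable ha hε j).const_mul _) measurableSet_Ioi fun z hz => ?_
      · have := ((hint j).const_mul ((-Y) ^ j / ((j.factorial : ℝ) * Real.Gamma ((j : ℝ) + b))))
        rw [← hF] at this
        exact this.norm
      have hz : 0 < z := hz
      have hz2 := Real.rpow_pos_of_pos hz a
      simp only [norm_mul, norm_div, norm_pow, Real.norm_eq_abs, abs_neg, Real.abs_exp, Nat.abs_cast, abs_of_pos hg, abs_of_pos hz, abs_of_pos (Real.rpow_pos_of_pos hz a), mul_pow]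
      have := Gs_bound hbh (w := X * z ^ 2) (by positivity)
      calc z ^ a * Real.exp (-ε * z ^ 2) * |Gs b (X * z ^ 2)| * (|Y| ^ j * (z ^ 2) ^ j / (j.factorial * Real.Gamma (j + b)))
        _ ≤ z ^ a * Real.exp (-ε * z ^ 2) * (1 / Real.Gamma b) * (|Y| ^ j * (z ^ 2) ^ j / (j.factorial * Real.Gamma (j + b))) := by gcongr
        _ = _ := by ring)
  simp only [hI] at hsumm
  have h2 := (dblsum hb0 (X / ε) (Y / ε)).mul_left (1 / 2 * ε ^ (-b) * Real.exp (-X / ε))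
  have h3 := h2.unique hsumm
  have e1 : X / ε * (Y / ε) = X * Y / ε ^ 2 := by field_simp
  rw [e1, ← neg_div] at h3
  rw [h3]
  refine setIntegral_congr_fun measurableSet_Ioi fun z hz => ?_
  rw [tsum_mul_left]
  simp [Gs]

lemma Gs_neg_nonneg {b : ℝ} (hb : 0 < b) {w : ℝ} (hw : 0 ≤ w) : 0 ≤ Gs b (-w) :=
  tsum_nonneg fun k => by
    have := gam_pos hb k
    rw [neg_neg]; positivity

/-- Mass of the heat kernel. -/
lemma heat_mass {a b ε X q : ℝ} (ha : 0 ≤ a) (hb : b = (a + 1) / 2) (hε : 0 < ε) (hX : 0 ≤ X) (hq : 0 < q) :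
    ∫⁻ y in Set.Ioi (0 : ℝ), ENNReal.ofReal (y ^ a) * ENNReal.ofReal
      |∫ z in Set.Ioi (0 : ℝ), z ^ a * Real.exp (-ε * z ^ 2) * Gs b (X * z ^ 2) * Gs b (q * y ^ 2 * z ^ 2)|
      = ENNReal.ofReal (1 / 4 * q ^ (-b)) := by
  have hb0 : 0 < b := by rw [hb]; positivity
  have hm := mk_int ha hb (div_pos hq hε) 0 (-(X * q / ε ^ 2))
  have e0 : -(-(X * q / ε ^ 2)) / (q / ε) = X / ε := by field_simp
  have hG := Real.Gamma_pos_of_pos hb0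
  rw [e0] at hm
  simp only [pow_zero, mul_one, zero_add, Finset.range_one, Finset.sum_singleton, Nat.choose_self, Nat.cast_zero, Nat.cast_one, one_mul] at hm
  have hm2 : ∫ z in Set.Ioi (0 : ℝ), z ^ a * Real.exp (-(q / ε) * z ^ 2) * Gs b (-(X * q / ε ^ 2) * z ^ 2) =
      1 / 2 * (q / ε) ^ (-b) * Real.exp (X / ε) := by
    rw [hm]; field_simp
  have hi : IntegrableOn (fun z : ℝ => z ^ a * Real.exp (-(q / ε) * z ^ 2) * Gs b (-(X * q / ε ^ 2) * z ^ 2)) (Set.Ioi 0) := by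
    by_contra h
    have h1 := integral_undef h
    rw [hm2] at h1
    have : 0 < 1 / 2 * (q / ε) ^ (-b) * Real.exp (X / ε) := by positivity
    linarith
  have hi' := hi.const_mul (1 / 2 * ε ^ (-b) * Real.exp (-X / ε))
  have hnn : ∀ z ∈ Set.Ioi (0 : ℝ), 0 ≤ (1 / 2 * ε ^ (-b) * Real.exp (-X / ε)) * (z ^ a * Real.exp (-(q / ε) * z ^ 2) * Gs b (-(X * q / ε ^ 2) * z ^ 2)) := by
    intro z hz
    have hz : 0 < z := hz
    have : 0 ≤ Gs b (-(X * q / ε ^ 2) * z ^ 2) := by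
      rw [neg_mul]; exact Gs_neg_nonneg hb0 (by positivity)
    positivity
  have key := ofReal_integral_eq_lintegral_ofReal hi' ((ae_restrict_iff' measurableSet_Ioi).2 (ae_of_all _ hnn))
  rw [integral_const_mul, hm2] at key
  have e5 : 1 / 2 * ε ^ (-b) * Real.exp (-X / ε) * (1 / 2 * (q / ε) ^ (-b) * Real.exp (X / ε)) = 1 / 4 * q ^ (-b) := by
    rw [Real.div_rpow hq.le hε.le]
    have : Real.exp (-X / ε) * Real.exp (X / ε) = 1 := by rw [← Real.exp_add]; ring_nf; simp
    have h2 : (0 : ℝ) < ε ^ (-b) := by positivity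
    calc _ = 1 / 4 * (ε ^ (-b) * (q ^ (-b) / ε ^ (-b))) * (Real.exp (-X / ε) * Real.exp (X / ε)) := by ring
      _ = _ := by rw [this]; field_simp
  rw [← e5, key]
  refine setLIntegral_congr_fun measurableSet_Ioi fun y hy => ?_
  have h6 := hnn y hy
  have hy : 0 < y := hy
  rw [← ENNReal.ofReal_mul (by positivity), weber ha hb hε hX]
  have e7 : y ^ a * (1 / 2 * ε ^ (-b) * Real.exp (-X / ε) * (Real.exp (-(q * y ^ 2) / ε) * Gs b (-(X * (q * y ^ 2) / ε ^ 2))))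
     = (1 / 2 * ε ^ (-b) * Real.exp (-X / ε)) * (y ^ a * Real.exp (-(q / ε) * y ^ 2) * Gs b (-(X * q / ε ^ 2) * y ^ 2)) := by
    have e8 : -(q * y ^ 2) / ε = -(q / ε) * y ^ 2 := by ring
    have e9 : -(X * (q * y ^ 2) / ε ^ 2) = -(X * q / ε ^ 2) * y ^ 2 := by ring
    rw [e8, e9]; ring
  rw [← e7] at h6 ⊢
  rw [abs_of_nonneg]
  exact nonneg_of_mul_nonneg_right h6 (by positivity)


structure GoodK {α : Type*} [MeasurableSpace α] (μ : Measure α) (k : α → α → ℂ) (M : ℝ≥0∞) (B : ℝ)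
    (g : ℕ → α → ℝ) : Prop where
  meas : Measurable (fun p : α × α => k p.1 p.2)
  bdd : ∀ x y, ‖k x y‖ ≤ B
  gmeas : ∀ n, Measurable (g n)
  gint : ∀ n, Integrable (g n) μ
  gnn : ∀ n x, 0 ≤ g n x
  glim : ∀ x, Tendsto (fun n => g n x) atTop (𝓝 1)
  schur : ∀ n y, ∫⁻ y', ‖∫ x, (g n x : ℂ) * (k x y * (starRingEnd ℂ) (k x y')) ∂μ‖ₑ ∂μ ≤ M

lemma GoodK.prod {α β : Type*} [MeasurableSpace α] [MeasurableSpace β] {μ : Measure α} {ν : Measure β}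
    [SFinite μ] [SFinite ν] {k₁ : α → α → ℂ} {k₂ : β → β → ℂ} {M₁ M₂ : ℝ≥0∞} {B₁ B₂ : ℝ}
    {g₁ : ℕ → α → ℝ} {g₂ : ℕ → β → ℝ} (h₁ : GoodK μ k₁ M₁ B₁ g₁) (h₂ : GoodK ν k₂ M₂ B₂ g₂) :
    GoodK (μ.prod ν) (fun X Y => k₁ X.1 Y.1 * k₂ X.2 Y.2) (M₁ * M₂) (B₁ * B₂)
      (fun n X => g₁ n X.1 * g₂ n X.2) where
  meas := by
    have h1 := h₁.meas.comp (f := fun p : (α × β) × (α × β) => (p.1.1, p.2.1)) (by fun_prop)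
    have h2 := h₂.meas.comp (f := fun p : (α × β) × (α × β) => (p.1.2, p.2.2)) (by fun_prop)
    exact h1.mul h2
  bdd := fun x y => by
    rw [norm_mul]
    exact mul_le_mul (h₁.bdd _ _) (h₂.bdd _ _) (norm_nonneg _) ((norm_nonneg _).trans (h₁.bdd x.1 y.1))
  gmeas := fun n => ((h₁.gmeas n).comp measurable_fst).mul ((h₂.gmeas n).comp measurable_snd)
  gint := fun n => (h₁.gint n).mul_prod (h₂.gint n)
  gnn := fun n x => mul_nonneg (h₁.gnn _ _) (h₂.gnn _ _)
  glim := fun x => by simpa using (h₁.glim x.1).mul (h₂.glim x.2)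
  schur := fun n Y => by
    have e : ∀ Y' : α × β, ∫ X : α × β, ((g₁ n X.1 * g₂ n X.2 : ℝ) : ℂ) *
        (k₁ X.1 Y.1 * k₂ X.2 Y.2 * (starRingEnd ℂ) (k₁ X.1 Y'.1 * k₂ X.2 Y'.2)) ∂(μ.prod ν) =
        (∫ x, (g₁ n x : ℂ) * (k₁ x Y.1 * (starRingEnd ℂ) (k₁ x Y'.1)) ∂μ) *
        (∫ x, (g₂ n x : ℂ) * (k₂ x Y.2 * (starRingEnd ℂ) (k₂ x Y'.2)) ∂ν) := by
      intro Y'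
      rw [← integral_prod_mul]
      congr 1; funext X
      rw [map_mul]; push_cast; ring
    simp only [e, enorm_mul]
    rw [lintegral_prod_mul (μ := μ) (ν := ν)
      (f := fun y => ‖∫ x, (g₁ n x : ℂ) * (k₁ x Y.1 * (starRingEnd ℂ) (k₁ x y)) ∂μ‖ₑ)
      (g := fun y => ‖∫ x, (g₂ n x : ℂ) * (k₂ x Y.2 * (starRingEnd ℂ) (k₂ x y)) ∂ν‖ₑ)]
    · exact mul_le_mul' (h₁.schur n Y.1) (h₂.schur n Y.2)
    · have h1 := h₁.meas.comp (f := fun p : α × α => (p.2, p.1)) (by fun_prop)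
      have h2 := h₁.meas.comp (f := fun p : α × α => (p.2, Y.1)) (by fun_prop)
      have h3 : Measurable (fun p : α × α => g₁ n p.2) := (h₁.gmeas n).comp measurable_snd
      have : StronglyMeasurable (fun p : α × α => (g₁ n p.2 : ℂ) * (k₁ p.2 Y.1 * (starRingEnd ℂ) (k₁ p.2 p.1))) :=
        ((Complex.measurable_ofReal.comp h3).mul (h2.mul (Complex.continuous_conj.measurable.comp h1))).stronglyMeasurable
      exact (this.integral_prod_right').enorm.aemeasurable
    · have h1 := h₂.meas.comp (f := fun p : β × β => (p.2, p.1)) (by fun_prop)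
      have h2 := h₂.meas.comp (f := fun p : β × β => (p.2, Y.2)) (by fun_prop)
      have h3 : Measurable (fun p : β × β => g₂ n p.2) := (h₂.gmeas n).comp measurable_snd
      have : StronglyMeasurable (fun p : β × β => (g₂ n p.2 : ℂ) * (k₂ p.2 Y.2 * (starRingEnd ℂ) (k₂ p.2 p.1))) :=
        ((Complex.measurable_ofReal.comp h3).mul (h2.mul (Complex.continuous_conj.measurable.comp h1))).stronglyMeasurable
      exact (this.integral_prod_right').enorm.aemeasurable

section
variable {α : Type*} [MeasurableSpace α] {μ : Measure α} [SFinite μ] {k : α → α → ℂ} {M : ℝ≥0∞} {B : ℝ}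
    {g : ℕ → α → ℝ}

lemma GoodK.T_sm (h : GoodK μ k M B g) {f : α → ℂ} (hf : Measurable f) :
    StronglyMeasurable (fun x => ∫ y, k x y * f y ∂μ) := by
  have : StronglyMeasurable (fun p : α × α => k p.1 p.2 * f p.2) :=
    (h.meas.mul (hf.comp measurable_snd)).stronglyMeasurable
  exact this.integral_prod_right'

lemma GoodK.kf_int (h : GoodK μ k M B g) {f : α → ℂ} (hfi : Integrable f μ) (x : α) :
    Integrable (fun y => k x y * f y) μ :=
  hfi.bdd_mul (c := B) (h.meas.comp (measurable_const.prodMk measurable_id)).aestronglyMeasurable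
    (ae_of_all _ fun y => h.bdd x y)

lemma GoodK.sup (h : GoodK μ k M B g) (f : α → ℂ) (x : α) :
    ‖∫ y, k x y * f y ∂μ‖ₑ ≤ ENNReal.ofReal B * ∫⁻ y, ‖f y‖ₑ ∂μ := by
  refine (enorm_integral_le_lintegral_enorm _).trans ?_
  rw [← lintegral_const_mul' _ _ ENNReal.ofReal_ne_top]
  refine lintegral_mono fun y => ?_
  rw [enorm_mul]
  gcongr
  rw [← ofReal_norm]
  exact ENNReal.ofReal_le_ofReal (h.bdd x y)

lemma two_mul_le_sq_enn (x y c : ℝ≥0∞) : 2 * (x * y * c) ≤ x ^ 2 * c + y ^ 2 * c := by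
  have : 2 * (x * y) ≤ x ^ 2 + y ^ 2 := by
    by_cases hx : x = ∞
    · simp [hx]
    by_cases hy : y = ∞
    · simp [hy]
    lift x to ℝ≥0 using hx
    lift y to ℝ≥0 using hy
    have := two_mul_le_add_sq (x : ℝ) (y : ℝ)
    have h2 : 2 * (x * y) ≤ x ^ 2 + y ^ 2 := by
      rw [← NNReal.coe_le_coe]; push_cast; linarith
    exact_mod_cast h2
  calc 2 * (x * y * c) = 2 * (x * y) * c := by ring
    _ ≤ (x ^ 2 + y ^ 2) * c := by gcongr
    _ = _ := by ring

lemma GoodK.l2n (h : GoodK μ k M B g) {f : α → ℂ} (hf : Measurable f) (hfi : Integrable f μ) (n : ℕ) :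
    ∫⁻ x, ENNReal.ofReal (g n x) * ‖∫ y, k x y * f y ∂μ‖ₑ ^ 2 ∂μ ≤ M * ∫⁻ y, ‖f y‖ₑ ^ 2 ∂μ := by
  set T : α → ℂ := fun x => ∫ y, k x y * f y ∂μ with hT
  set K : α → α → ℂ := fun y y' => ∫ x, (g n x : ℂ) * (k x y * (starRingEnd ℂ) (k x y')) ∂μ with hK
  have hTb : ∃ D : ℝ, ∀ x, ‖T x‖ ≤ D := by
    refine ⟨∫ y, B * ‖f y‖ ∂μ, fun x => (norm_integral_le_integral_norm _).trans ?_⟩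
    refine integral_mono (h.kf_int hfi x).norm (hfi.norm.const_mul _) fun y => ?_
    simp only [norm_mul]
    gcongr
    exact h.bdd x y
  obtain ⟨D, hD⟩ := hTb
  have hTm : StronglyMeasurable T := h.T_sm hf
  -- integrability of the triple integrand
  have hcm : Measurable (fun z : ℂ => (starRingEnd ℂ) z) := Complex.continuous_conj.measurable
  have hk1 : Measurable (fun q : α × (α × α) => k q.1 q.2.1) :=
    h.meas.comp (f := fun q : α × (α × α) => (q.1, q.2.1)) (by fun_prop)
  have hk2 : Measurable (fun q : α × (α × α) => k q.1 q.2.2) :=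
    h.meas.comp (f := fun q : α × (α × α) => (q.1, q.2.2)) (by fun_prop)
  have hfc : Integrable (fun y => (starRingEnd ℂ) (f y)) μ := by
    refine hfi.mono (hcm.comp hf).aestronglyMeasurable (ae_of_all _ fun y => by simp)
  have htri : Integrable (fun q : α × (α × α) =>
      ((g n q.1 : ℂ) * (k q.1 q.2.1 * (starRingEnd ℂ) (k q.1 q.2.2))) * (f q.2.1 * (starRingEnd ℂ) (f q.2.2)))
      (μ.prod (μ.prod μ)) := by
    have i1 := ((h.gint n).ofReal (𝕜 := ℂ)).mul_prod (hfi.mul_prod hfc)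
    have i2 := i1.bdd_mul (c := B * B) (f := fun q : α × (α × α) => k q.1 q.2.1 * (starRingEnd ℂ) (k q.1 q.2.2))
      (hk1.mul (hcm.comp hk2)).aestronglyMeasurable (ae_of_all _ fun q => by
        rw [norm_mul, RCLike.norm_conj]
        exact mul_le_mul (h.bdd _ _) (h.bdd _ _) (norm_nonneg _) ((norm_nonneg _).trans (h.bdd q.1 q.2.1)))
    refine i2.congr (ae_of_all _ fun q => ?_)
    simp only [RCLike.ofReal_eq_complex_ofReal]
    ring
  have hsq : ∀ x, (g n x : ℂ) * ((‖T x‖ ^ 2 : ℝ) : ℂ) = ∫ p : α × α,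
      ((g n x : ℂ) * (k x p.1 * (starRingEnd ℂ) (k x p.2))) * (f p.1 * (starRingEnd ℂ) (f p.2)) ∂(μ.prod μ) := by
    intro x
    have e1 : ((‖T x‖ ^ 2 : ℝ) : ℂ) = T x * (starRingEnd ℂ) (T x) := by
      rw [Complex.mul_conj, Complex.normSq_eq_norm_sq]
    rw [e1]
    simp only [hT]
    rw [← integral_conj, ← integral_prod_mul, ← integral_const_mul]
    congr 1; funext p
    rw [map_mul]; ring
  have hswap : ∫ x, (g n x : ℂ) * ((‖T x‖ ^ 2 : ℝ) : ℂ) ∂μ =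
      ∫ p : α × α, K p.1 p.2 * (f p.1 * (starRingEnd ℂ) (f p.2)) ∂(μ.prod μ) := by
    simp only [hsq]
    rw [integral_integral_swap htri]
    congr 1; funext p
    rw [integral_mul_const]
  have hint : Integrable (fun x => g n x * ‖T x‖ ^ 2) μ := by
    refine (h.gint n).mul_bdd (c := D ^ 2) (hTm.norm.pow 2).aestronglyMeasurable (ae_of_all _ fun x => ?_)
    rw [norm_pow, norm_norm]
    gcongr; exact hD x
  have hL : ∫⁻ x, ENNReal.ofReal (g n x) * ‖T x‖ₑ ^ 2 ∂μ =
      ‖∫ p : α × α, K p.1 p.2 * (f p.1 * (starRingEnd ℂ) (f p.2)) ∂(μ.prod μ)‖ₑ := by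
    rw [← hswap]
    have e2 : ∫ x, (g n x : ℂ) * ((‖T x‖ ^ 2 : ℝ) : ℂ) ∂μ = ((∫ x, g n x * ‖T x‖ ^ 2 ∂μ : ℝ) : ℂ) := by
      rw [← integral_complex_ofReal]; congr 1; funext x; push_cast; rfl
    have hnn : ∀ x, 0 ≤ g n x * ‖T x‖ ^ 2 := fun x => mul_nonneg (h.gnn n x) (by positivity)
    rw [e2, ← ofReal_norm, Complex.norm_real, Real.norm_of_nonneg (integral_nonneg hnn),
      ofReal_integral_eq_lintegral_ofReal hint (ae_of_all _ hnn)]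
    refine lintegral_congr fun x => ?_
    rw [ENNReal.ofReal_mul (h.gnn n x), ENNReal.ofReal_pow (norm_nonneg _), ofReal_norm]
  rw [hL]
  refine (enorm_integral_le_lintegral_enorm _).trans ?_
  have hKm : StronglyMeasurable (fun p : α × α => K p.1 p.2) := by
    have j1 := h.meas.comp (f := fun p : (α × α) × α => (p.2, p.1.1)) (by fun_prop)
    have j2 := h.meas.comp (f := fun p : (α × α) × α => (p.2, p.1.2)) (by fun_prop)
    have j3 : Measurable (fun p : (α × α) × α => g n p.2) := (h.gmeas n).comp measurable_snd
    have : StronglyMeasurable (fun p : (α × α) × α => (g n p.2 : ℂ) * (k p.2 p.1.1 * (starRingEnd ℂ) (k p.2 p.1.2))) :=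
      ((Complex.measurable_ofReal.comp j3).mul (j1.mul (hcm.comp j2))).stronglyMeasurable
    exact this.integral_prod_right'
  have hKs : ∀ y y', ‖K y y'‖ₑ = ‖K y' y‖ₑ := by
    intro y y'
    have : K y y' = (starRingEnd ℂ) (K y' y) := by
      simp only [hK]
      rw [← integral_conj]
      congr 1; funext x
      simp only [map_mul, Complex.conj_ofReal, Complex.conj_conj]; ring
    rw [this, ← ofReal_norm, ← ofReal_norm, RCLike.norm_conj]
  have hKme : Measurable (fun p : α × α => ‖K p.1 p.2‖ₑ) := hKm.enorm
  have hM1 : Measurable (fun p : α × α => ‖f p.1‖ₑ ^ 2 * ‖K p.1 p.2‖ₑ) :=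
    ((hf.comp measurable_fst).enorm.pow_const 2).mul hKme
  have hM2 : Measurable (fun p : α × α => ‖f p.2‖ₑ ^ 2 * ‖K p.1 p.2‖ₑ) :=
    ((hf.comp measurable_snd).enorm.pow_const 2).mul hKme
  have hA : ∫⁻ p : α × α, ‖f p.1‖ₑ ^ 2 * ‖K p.1 p.2‖ₑ ∂(μ.prod μ) ≤ M * ∫⁻ y, ‖f y‖ₑ ^ 2 ∂μ := by
    rw [lintegral_prod _ hM1.aemeasurable,
      ← lintegral_const_mul _ (hf.enorm.pow_const 2)]
    refine lintegral_mono fun y => ?_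
    simp only
    rw [lintegral_const_mul' _ _ (by simp), mul_comm]
    gcongr
    exact h.schur n y
  have hB : ∫⁻ p : α × α, ‖f p.2‖ₑ ^ 2 * ‖K p.1 p.2‖ₑ ∂(μ.prod μ) ≤ M * ∫⁻ y, ‖f y‖ₑ ^ 2 ∂μ := by
    rw [lintegral_prod_symm _ hM2.aemeasurable,
      ← lintegral_const_mul _ (hf.enorm.pow_const 2)]
    refine lintegral_mono fun y => ?_
    simp only [fun y' => hKs y' y]
    rw [lintegral_const_mul' _ _ (by simp), mul_comm]
    gcongr
    exact h.schur n y
  have h2 : 2 * ∫⁻ p : α × α, ‖K p.1 p.2 * (f p.1 * (starRingEnd ℂ) (f p.2))‖ₑ ∂(μ.prod μ) ≤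
      2 * (M * ∫⁻ y, ‖f y‖ₑ ^ 2 ∂μ) := by
    rw [← lintegral_const_mul' _ _ (by norm_num)]
    calc _ ≤ ∫⁻ p : α × α, (‖f p.1‖ₑ ^ 2 * ‖K p.1 p.2‖ₑ + ‖f p.2‖ₑ ^ 2 * ‖K p.1 p.2‖ₑ) ∂(μ.prod μ) := by
          refine lintegral_mono fun p => ?_
          have : ‖(starRingEnd ℂ) (f p.2)‖ₑ = ‖f p.2‖ₑ := by
            rw [← ofReal_norm, ← ofReal_norm, RCLike.norm_conj]
          simp only
          rw [enorm_mul, enorm_mul, this, mul_comm ‖K p.1 p.2‖ₑ]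
          exact two_mul_le_sq_enn _ _ _
      _ ≤ _ := by
          rw [lintegral_add_left hM1, two_mul]
          exact add_le_add hA hB
  exact (ENNReal.mul_le_mul_iff_right (by norm_num) (by norm_num)).1 h2

lemma GoodK.l2 (h : GoodK μ k M B g) {f : α → ℂ} (hf : Measurable f) (hfi : Integrable f μ) :
    ∫⁻ x, ‖∫ y, k x y * f y ∂μ‖ₑ ^ 2 ∂μ ≤ M * ∫⁻ y, ‖f y‖ₑ ^ 2 ∂μ := by
  have e : ∀ x, ‖∫ y, k x y * f y ∂μ‖ₑ ^ 2 =
      liminf (fun n => ENNReal.ofReal (g n x) * ‖∫ y, k x y * f y ∂μ‖ₑ ^ 2) atTop := by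
    intro x
    symm
    apply Tendsto.liminf_eq
    have h1 := (ENNReal.continuous_ofReal.tendsto _).comp (h.glim x)
    have h2 := ENNReal.Tendsto.mul_const (b := ‖∫ y, k x y * f y ∂μ‖ₑ ^ 2) h1 (Or.inl (by simp))
    simpa using h2
  rw [lintegral_congr e]
  refine (lintegral_liminf_le fun n => ?_).trans ?_
  · exact (h.gmeas n).ennreal_ofReal.mul ((h.T_sm hf).enorm.pow_const 2)
  · refine liminf_le_of_frequently_le' (Frequently.of_forall fun n => h.l2n hf hfi n)
end


lemma Sfree_const_norm (d : ℕ) (t : ℝ) (ht : t ≠ 0) :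
    ‖(4 * (Real.pi : ℂ) * Complex.I * (t : ℂ)) ^ (-(d : ℂ) / 2)‖ = (4 * Real.pi * |t|) ^ (-(d : ℝ) / 2) := by
  have h0 : (4 * (Real.pi : ℂ) * Complex.I * (t : ℂ)) ≠ 0 := by
    simp [ht, Real.pi_ne_zero]
  have e1 : (-(d : ℂ) / 2) = ((-(d : ℝ) / 2 : ℝ) : ℂ) := by push_cast; rfl
  rw [Complex.norm_cpow_of_ne_zero h0, e1, Complex.ofReal_re, Complex.ofReal_im]
  simp [abs_of_pos Real.pi_pos]

lemma Sfree_norm (d : ℕ) (t : ℝ) (ht : t ≠ 0) (x y : Fin d → ℝ) :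
    ‖Sfree d x y t‖ = (4 * Real.pi * |t|) ^ (-(d : ℝ) / 2) := by
  rw [Sfree, norm_mul, Sfree_const_norm d t ht]
  have : Complex.I * ((∑ i, (x i - y i) ^ 2 : ℝ) : ℂ) / ((4 * t : ℝ) : ℂ) =
      (((∑ i, (x i - y i) ^ 2) / (4 * t) : ℝ) : ℂ) * Complex.I := by push_cast; ring
  rw [this, Complex.norm_exp_ofReal_mul_I, mul_one]

lemma Sfree_pair (d : ℕ) (t ε : ℝ) (ht : t ≠ 0) (hε : 0 < ε) (y y' : Fin d → ℝ) :
    ‖∫ x : Fin d → ℝ, ((Real.exp (-ε * ∑ i, x i ^ 2) : ℝ) : ℂ) *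
      (Sfree d x y t * (starRingEnd ℂ) (Sfree d x y' t))‖ =
    ((4 * Real.pi * |t|) ^ (-(d : ℝ) / 2)) ^ 2 * (Real.pi / ε) ^ ((d : ℝ) / 2) *
      Real.exp (-(1 / (16 * t ^ 2 * ε)) * ∑ i, (y i - y' i) ^ 2) := by
  have ht' : (t : ℂ) ≠ 0 := by exact_mod_cast ht
  set A := (4 * (Real.pi : ℂ) * Complex.I * (t : ℂ)) ^ (-(d : ℂ) / 2) with hA
  have e : ∀ x : Fin d → ℝ, ((Real.exp (-ε * ∑ i, x i ^ 2) : ℝ) : ℂ) *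
      (Sfree d x y t * (starRingEnd ℂ) (Sfree d x y' t)) =
      (A * (starRingEnd ℂ) A * cexp ((((∑ i, y i ^ 2 - ∑ i, y' i ^ 2) / (4 * t) : ℝ) : ℂ) * I)) *
      cexp (-(ε : ℂ) * ∑ i, (x i : ℂ) ^ 2 + ∑ i, ((-(y i - y' i) / (2 * t) : ℝ) * I : ℂ) * x i) := by
    intro x
    rw [Sfree, Sfree, ← hA, map_mul, ← Complex.exp_conj]
    simp only [map_div₀, map_mul, Complex.conj_I, Complex.conj_ofReal]
    have : ∀ p q r s u v w : ℂ, p * (A * q * (starRingEnd ℂ A * r)) = (A * starRingEnd ℂ A) * (p * q * r) := by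
      intros; ring
    rw [this _ _ _ 0 0 0 0, mul_assoc (A * (starRingEnd ℂ) A)]
    congr 1
    rw [Complex.ofReal_exp, ← Complex.exp_add, ← Complex.exp_add, ← Complex.exp_add]
    congr 1
    have h1 : ∀ w : Fin d → ℝ, ∑ i, (x i - w i) ^ 2 = ∑ i, x i ^ 2 - 2 * ∑ i, x i * w i + ∑ i, w i ^ 2 := by
      intro w
      rw [Finset.mul_sum, ← Finset.sum_sub_distrib, ← Finset.sum_add_distrib]
      exact Finset.sum_congr rfl fun i _ => by ring
    have h2 : ∑ i, ((-(y i - y' i) / (2 * t) : ℝ) * I : ℂ) * x i =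
        ((-(∑ i, x i * y i - ∑ i, x i * y' i) / (2 * t) : ℝ) : ℂ) * I := by
      rw [← Finset.sum_sub_distrib, ← Finset.sum_neg_distrib, Finset.sum_div]
      push_cast
      rw [Finset.sum_mul]
      exact Finset.sum_congr rfl fun i _ => by ring
    rw [h1, h1, h2]
    push_cast
    field_simp
    ring
  simp_rw [e]
  rw [integral_const_mul, GaussianFourier.integral_cexp_neg_mul_sum_add (by simpa using hε)]
  have hAn : ‖A‖ = (4 * Real.pi * |t|) ^ (-(d : ℝ) / 2) := Sfree_const_norm d t ht
  rw [norm_mul, norm_mul, norm_mul, norm_mul, RCLike.norm_conj, Complex.norm_exp_ofReal_mul_I, hAn,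
    mul_one, ← pow_two, ← mul_assoc]
  congr 1
  congr 1
  · rw [Fintype.card_fin]
    have : ((Real.pi : ℂ) / ε) = ((Real.pi / ε : ℝ) : ℂ) := by push_cast; rfl
    rw [this]
    have : ((d : ℂ) / 2) = ((d / 2 : ℝ) : ℂ) := by push_cast; rfl
    rw [this, Complex.norm_cpow_eq_rpow_re_of_pos (by positivity), Complex.ofReal_re]
  · have : (∑ i, ((-(y i - y' i) / (2 * t) : ℝ) * I : ℂ) ^ 2) / (4 * ε) =
        ((-(1 / (16 * t ^ 2 * ε)) * ∑ i, (y i - y' i) ^ 2 : ℝ) : ℂ) := by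
      rw [Finset.sum_div, Finset.mul_sum, Complex.ofReal_sum]
      refine Finset.sum_congr rfl fun i _ => ?_
      rw [mul_pow, Complex.I_sq]
      have hε' : (ε : ℂ) ≠ 0 := by exact_mod_cast hε.ne'
      push_cast
      field_simp
      ring
    rw [this, Complex.norm_exp_ofReal]

lemma gauss_mass (d : ℕ) (β : ℝ) (hβ : 0 < β) (y : Fin d → ℝ) :
    Integrable (fun y' : Fin d → ℝ => Real.exp (-β * ∑ i, (y i - y' i) ^ 2)) ∧
    ∫ y' : Fin d → ℝ, Real.exp (-β * ∑ i, (y i - y' i) ^ 2) = (√(Real.pi / β)) ^ d := by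
  have e : (fun y' : Fin d → ℝ => Real.exp (-β * ∑ i, (y i - y' i) ^ 2)) =
      fun y' => ∏ i, Real.exp (-β * (y i - y' i) ^ 2) := by
    funext y'
    rw [← Real.exp_sum, Finset.mul_sum]
  rw [e]
  constructor
  · apply Integrable.fintype_prod (f := fun i (v : ℝ) => Real.exp (-β * (y i - v) ^ 2))
    intro i
    exact (integrable_exp_neg_mul_sq hβ).comp_sub_left (y i)
  · rw [integral_fintype_prod_volume_eq_prod (f := fun i (v : ℝ) => Real.exp (-β * (y i - v) ^ 2))]
    have : ∀ i, ∫ v : ℝ, Real.exp (-β * (y i - v) ^ 2) = √(Real.pi / β) := by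
      intro i
      rw [integral_sub_left_eq_self (fun v => Real.exp (-β * v ^ 2)) volume (y i), integral_gaussian]
    simp only [this, Finset.prod_const, Finset.card_univ, Fintype.card_fin]

lemma goodK_free (d : ℕ) (t : ℝ) (ht : t ≠ 0) :
    GoodK (volume : Measure (Fin d → ℝ)) (fun x y => Sfree d x y t) 1 ((4 * Real.pi * |t|) ^ (-(d : ℝ) / 2))
      (fun n x => Real.exp (-(1 / ((n : ℝ) + 1)) * ∑ i, x i ^ 2)) where
  meas := by
    unfold Sfree
    fun_prop
  bdd := fun x y => (Sfree_norm d t ht x y).le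
  gmeas := fun n => by fun_prop
  gint := fun n => by
    have := (gauss_mass d (1 / ((n : ℝ) + 1)) (by positivity) 0).1
    simpa using this
  gnn := fun n x => (Real.exp_pos _).le
  glim := fun x => by
    have h1 := tendsto_one_div_add_atTop_nhds_zero_nat (𝕜 := ℝ)
    have h2 := (h1.neg.mul_const (∑ i, x i ^ 2))
    have h3 := (Real.continuous_exp.tendsto _).comp h2
    simpa [Function.comp_def] using h3
  schur := fun n y => by
    set ε : ℝ := 1 / ((n : ℝ) + 1) with hεd
    have hε : 0 < ε := by positivity
    have h1 : ∀ y', ‖∫ x : Fin d → ℝ, ((Real.exp (-ε * ∑ i, x i ^ 2) : ℝ) : ℂ) *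
      (Sfree d x y t * (starRingEnd ℂ) (Sfree d x y' t))‖ₑ = ENNReal.ofReal
      (((4 * Real.pi * |t|) ^ (-(d : ℝ) / 2)) ^ 2 * (Real.pi / ε) ^ ((d : ℝ) / 2) *
      Real.exp (-(1 / (16 * t ^ 2 * ε)) * ∑ i, (y i - y' i) ^ 2)) := by
      intro y'
      rw [← ofReal_norm, Sfree_pair d t ε ht hε]
    have ht2 : 0 < |t| := abs_pos.2 ht
    have hβ : 0 < 1 / (16 * t ^ 2 * ε) := by positivity
    obtain ⟨hi, hv⟩ := gauss_mass d _ hβ y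
    rw [lintegral_congr h1, ← ofReal_integral_eq_lintegral_ofReal (hi.const_mul _)
      (ae_of_all _ fun _ => by positivity), integral_const_mul, hv, ← ENNReal.ofReal_one]
    refine ENNReal.ofReal_le_ofReal (le_of_eq ?_)
    have hp := Real.pi_pos
    have e1 : ((4 * Real.pi * |t|) ^ (-(d : ℝ) / 2)) ^ 2 = ((4 * Real.pi * |t|) ^ d)⁻¹ := by
      rw [← Real.rpow_natCast, ← Real.rpow_mul (by positivity), ← Real.rpow_natCast, ← Real.rpow_neg (by positivity)]
      congr 1; push_cast; ring
    have e2 : (Real.pi / ε) ^ ((d : ℝ) / 2) = √(Real.pi / ε) ^ d := by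
      rw [Real.sqrt_eq_rpow, ← Real.rpow_natCast, ← Real.rpow_mul (by positivity)]
      congr 1; ring
    have e3 : √(Real.pi / ε) * √(Real.pi / (1 / (16 * t ^ 2 * ε))) = 4 * Real.pi * |t| := by
      rw [← Real.sqrt_mul (by positivity)]
      have : Real.pi / ε * (Real.pi / (1 / (16 * t ^ 2 * ε))) = (4 * Real.pi * |t|) ^ 2 := by
        rw [mul_pow, mul_pow, sq_abs]
        field_simp; ring
      rw [this, Real.sqrt_sq (by positivity)]
    rw [e1, e2, mul_assoc, ← mul_pow, e3]
    exact inv_mul_cancel₀ (by positivity)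


def μz (a : ℝ) : Measure ℝ :=
  ((volume : Measure ℝ).restrict (Set.Ioi 0)).withDensity fun z => ENNReal.ofReal (z ^ a)

instance (a : ℝ) : SFinite (μz a) := by unfold μz; infer_instance

def kz (a t z ζ : ℝ) : ℂ :=
  (Complex.exp (-Complex.I * ((Real.sign t : ℝ) : ℂ) * (((a + 1) * Real.pi / 4 : ℝ) : ℂ)) /
      (((2 * |t|) ^ ((a + 1) / 2) : ℝ) : ℂ)) *
    (((2 : ℝ) ^ ((1 - a) / 2) * Gs ((a + 1) / 2) ((1 / (2 * |t|)) ^ 2 / 4 * ζ ^ 2 * z ^ 2) : ℝ) : ℂ) *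
    Complex.exp (Complex.I * ((z ^ 2 + ζ ^ 2 : ℝ) : ℂ) / ((4 * t : ℝ) : ℂ))

lemma SaK_eq_kz {a t z ζ : ℝ} (ht : t ≠ 0) (hz : 0 < z) (hζ : 0 < ζ) : SaK a z ζ t = kz a t z ζ := by
  have ht2 : 0 < |t| := abs_pos.2 ht
  set s : ℝ := z * ζ / (2 * |t|) with hs
  have hs0 : 0 < s := by positivity
  have key : s ^ ((1 - a) / 2) * besselJ ((a - 1) / 2) s =
      (2 : ℝ) ^ ((1 - a) / 2) * Gs ((a + 1) / 2) ((1 / (2 * |t|)) ^ 2 / 4 * ζ ^ 2 * z ^ 2) := by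
    rw [besselJ, Gs, ← tsum_mul_left, ← tsum_mul_left]
    refine tsum_congr fun k => ?_
    have e0 : (1 / (2 * |t|)) ^ 2 / 4 * ζ ^ 2 * z ^ 2 = (s / 2) ^ 2 := by rw [hs]; field_simp; ring
    rw [e0]
    have e1 : (s / 2) ^ (2 * (k : ℝ) + (a - 1) / 2) = ((s / 2) ^ 2) ^ k * (s / 2) ^ ((a - 1) / 2) := by
      rw [Real.rpow_add (by positivity), ← pow_mul, ← Real.rpow_natCast]
      push_cast; rfl
    have e2 : s ^ ((1 - a) / 2) = 2 ^ ((1 - a) / 2) * (s / 2) ^ ((1 - a) / 2) := by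
      rw [← Real.mul_rpow (by positivity) (by positivity)]; congr 1; ring
    have e3 : (s / 2) ^ ((1 - a) / 2) * (s / 2) ^ ((a - 1) / 2) = 1 := by
      rw [← Real.rpow_add (by positivity)]
      have : (1 - a) / 2 + (a - 1) / 2 = 0 := by ring
      rw [this, Real.rpow_zero]
    have e4 : (k : ℝ) + (a - 1) / 2 + 1 = k + (a + 1) / 2 := by ring
    rw [e1, e2, e4, neg_pow ((s / 2) ^ 2)]
    calc _ = 2 ^ ((1 - a) / 2) * ((-1) ^ k * ((s / 2) ^ 2) ^ k / ((k.factorial : ℝ) * Real.Gamma (k + (a + 1) / 2))) *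
        ((s / 2) ^ ((1 - a) / 2) * (s / 2) ^ ((a - 1) / 2)) := by ring
      _ = _ := by rw [e3, mul_one]
  rw [SaK, kz, ← key]
  push_cast
  ring

lemma kz_pair {a t : ℝ} (z ζ ζ' : ℝ) (ht : t ≠ 0) :
    kz a t z ζ * (starRingEnd ℂ) (kz a t z ζ') =
      cexp ((((ζ ^ 2 - ζ' ^ 2) / (4 * t) : ℝ) : ℂ) * I) *
      (((((2 * |t|) ^ ((a + 1) / 2))⁻¹ * (2 : ℝ) ^ ((1 - a) / 2)) ^ 2 *
        (Gs ((a + 1) / 2) ((1 / (2 * |t|)) ^ 2 / 4 * ζ ^ 2 * z ^ 2) *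
        Gs ((a + 1) / 2) ((1 / (2 * |t|)) ^ 2 / 4 * ζ' ^ 2 * z ^ 2)) : ℝ) : ℂ) := by
  rw [kz, kz]
  set P := (-Complex.I * ((Real.sign t : ℝ) : ℂ) * (((a + 1) * Real.pi / 4 : ℝ) : ℂ)) with hP
  set Q := Gs ((a + 1) / 2) ((1 / (2 * |t|)) ^ 2 / 4 * ζ ^ 2 * z ^ 2)
  set Q' := Gs ((a + 1) / 2) ((1 / (2 * |t|)) ^ 2 / 4 * ζ' ^ 2 * z ^ 2)
  simp only [map_mul, map_div₀, ← Complex.exp_conj, Complex.conj_I, Complex.conj_ofReal]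
  have e1 : cexp P * cexp ((starRingEnd ℂ) P) = 1 := by
    rw [← Complex.exp_add, hP]
    simp only [map_mul, map_neg, Complex.conj_I, Complex.conj_ofReal]
    ring_nf
    exact Complex.exp_zero
  have e2 : cexp (Complex.I * ((z ^ 2 + ζ ^ 2 : ℝ) : ℂ) / ((4 * t : ℝ) : ℂ)) *
      cexp (-Complex.I * ((z ^ 2 + ζ' ^ 2 : ℝ) : ℂ) / ((4 * t : ℝ) : ℂ)) =
      cexp ((((ζ ^ 2 - ζ' ^ 2) / (4 * t) : ℝ) : ℂ) * I) := by
    rw [← Complex.exp_add]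
    congr 1
    push_cast
    ring
  rw [← e2]
  generalize cexp ((starRingEnd ℂ) P) = u' at e1 ⊢
  generalize cexp P = u at e1 ⊢
  generalize cexp (Complex.I * ((z ^ 2 + ζ ^ 2 : ℝ) : ℂ) / ((4 * t : ℝ) : ℂ)) = v
  generalize cexp (-Complex.I * ((z ^ 2 + ζ' ^ 2 : ℝ) : ℂ) / ((4 * t : ℝ) : ℂ)) = v'
  generalize (2 * |t|) ^ ((a + 1) / 2) = w
  generalize (2 : ℝ) ^ ((1 - a) / 2) = s
  push_cast
  linear_combination (v * v' * (((w : ℂ)⁻¹ * s) ^ 2 * (Q * Q'))) * e1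

lemma goodK_z (a t : ℝ) (ha : 0 ≤ a) (ht : t ≠ 0) :
    GoodK (μz a) (kz a t) 1 (((2 * |t|) ^ ((a + 1) / 2))⁻¹ * (2 : ℝ) ^ ((1 - a) / 2) * (1 / Real.Gamma ((a + 1) / 2)))
      (fun n z => Real.exp (-(1 / ((n : ℝ) + 1)) * z ^ 2)) where
  meas := by
    have := Gs_cont (b := (a + 1) / 2) (by linarith)
    unfold kz
    fun_prop
  bdd := fun z ζ => by
    have e1 : ‖cexp (-Complex.I * ((Real.sign t : ℝ) : ℂ) * (((a + 1) * Real.pi / 4 : ℝ) : ℂ))‖ = 1 := by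
      rw [show (-Complex.I * ((Real.sign t : ℝ) : ℂ) * (((a + 1) * Real.pi / 4 : ℝ) : ℂ)) =
        ((-(Real.sign t * ((a + 1) * Real.pi / 4)) : ℝ) : ℂ) * I by push_cast; ring]
      exact Complex.norm_exp_ofReal_mul_I _
    have e2 : ‖cexp (Complex.I * ((z ^ 2 + ζ ^ 2 : ℝ) : ℂ) / ((4 * t : ℝ) : ℂ))‖ = 1 := by
      rw [show (Complex.I * ((z ^ 2 + ζ ^ 2 : ℝ) : ℂ) / ((4 * t : ℝ) : ℂ)) =
        (((z ^ 2 + ζ ^ 2) / (4 * t) : ℝ) : ℂ) * I by push_cast; ring]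
      exact Complex.norm_exp_ofReal_mul_I _
    rw [kz, norm_mul, norm_mul, e2, norm_div, e1, mul_one, Complex.norm_real, Complex.norm_real, Real.norm_eq_abs,
      Real.norm_eq_abs, abs_mul, abs_of_nonneg (a := (2 * |t|) ^ ((a + 1) / 2)) (by positivity),
      abs_of_nonneg (a := (2 : ℝ) ^ ((1 - a) / 2)) (by positivity), ← mul_assoc, one_div]
    gcongr
    exact Gs_bound (b := (a + 1) / 2) (by linarith) (by positivity)
  gmeas := fun n => by fun_prop
  gint := fun n => by
    unfold μz
    rw [integrable_withDensity_iff (by fun_prop) (ae_of_all _ fun _ => ENNReal.ofReal_lt_top)]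
    have := gm_integrable ha (show (0:ℝ) < 1 / ((n : ℝ) + 1) by positivity) 0
    refine IntegrableOn.congr_fun this (fun z hz => ?_) measurableSet_Ioi
    simp only [pow_zero, mul_one]
    rw [ENNReal.toReal_ofReal (Real.rpow_nonneg (le_of_lt hz) _), mul_comm]
  gnn := fun n x => (Real.exp_pos _).le
  glim := fun x => by
    have h1 := tendsto_one_div_add_atTop_nhds_zero_nat (𝕜 := ℝ)
    have h2 := (h1.neg.mul_const (x ^ 2))
    have h3 := (Real.continuous_exp.tendsto _).comp h2
    simpa [Function.comp_def] using h3
  schur := fun n ζ => by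
    have ht2 : 0 < |t| := abs_pos.2 ht
    set ε : ℝ := 1 / ((n : ℝ) + 1) with hεd
    have hε : 0 < ε := by positivity
    set c := ((2 * |t|) ^ ((a + 1) / 2))⁻¹ * (2 : ℝ) ^ ((1 - a) / 2) with hc
    have hc0 : 0 < c := by positivity
    set q := (1 / (2 * |t|)) ^ 2 / 4 with hq
    have hq0 : 0 < q := by positivity
    have h1 : ∀ ζ', ‖∫ z, ((Real.exp (-ε * z ^ 2) : ℝ) : ℂ) *
        (kz a t z ζ * (starRingEnd ℂ) (kz a t z ζ')) ∂(μz a)‖ₑ = ENNReal.ofReal (c ^ 2) *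
        ENNReal.ofReal |∫ z in Set.Ioi 0, z^a * Real.exp (-ε*z^2) * Gs ((a + 1) / 2) (q * ζ ^ 2 *z^2) *
          Gs ((a + 1) / 2) (q*ζ'^2*z^2)| := by
      intro ζ'
      unfold μz
      rw [integral_withDensity_eq_integral_toReal_smul (by fun_prop) (ae_of_all _ fun _ => ENNReal.ofReal_lt_top)]
      have e : ∫ z in Set.Ioi (0 : ℝ), (ENNReal.ofReal (z ^ a)).toReal • (((Real.exp (-ε * z ^ 2) : ℝ) : ℂ) *
        (kz a t z ζ * (starRingEnd ℂ) (kz a t z ζ'))) =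
        ∫ z in Set.Ioi (0 : ℝ), (cexp ((((ζ ^ 2 - ζ' ^ 2) / (4 * t) : ℝ) : ℂ) * I) * ((c ^ 2 : ℝ) : ℂ)) *
          ((z^a * Real.exp (-ε*z^2) * Gs ((a + 1) / 2) (q * ζ ^ 2 *z^2) *
          Gs ((a + 1) / 2) (q*ζ'^2*z^2) : ℝ) : ℂ) := by
        refine setIntegral_congr_fun measurableSet_Ioi fun z hz => ?_
        rw [ENNReal.toReal_ofReal (Real.rpow_nonneg (le_of_lt hz) _), kz_pair _ _ _ ht, Complex.real_smul, ← hc, ← hq]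
        push_cast
        ring
      rw [e, integral_const_mul, enorm_mul, enorm_mul, integral_complex_ofReal]
      have e2 : ‖cexp ((((ζ ^ 2 - ζ' ^ 2) / (4 * t) : ℝ) : ℂ) * I)‖ₑ = 1 := by
        rw [← ofReal_norm, Complex.norm_exp_ofReal_mul_I, ENNReal.ofReal_one]
      rw [e2, one_mul, ← ofReal_norm, ← ofReal_norm, Complex.norm_real, Complex.norm_real, Real.norm_eq_abs,
        Real.norm_eq_abs, abs_of_nonneg (sq_nonneg c)]
    rw [lintegral_congr h1]
    have hM := heat_mass (X := q * ζ ^ 2) ha rfl hε (by positivity) hq0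
    rw [lintegral_const_mul' _ _ ENNReal.ofReal_ne_top]
    calc _ ≤ ENNReal.ofReal (c ^ 2) * ENNReal.ofReal (1 / 4 * q ^ (-((a + 1) / 2))) := by
          gcongr
          rw [← hM]
          unfold μz
          exact lintegral_withDensity_le_lintegral_mul _ (by fun_prop) _
      _ = 1 := by
          rw [← ENNReal.ofReal_mul (by positivity), ← ENNReal.ofReal_one]
          congr 1
          have e1 : c = (2 * |t|) ^ (-((a + 1) / 2)) * 2 ^ ((1 - a) / 2) := by
            rw [hc, Real.rpow_neg (by positivity)]
          have e2 : q = (2 * |t|) ^ (-2 : ℝ) * 2 ^ (-2 : ℝ) := by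
            rw [Real.rpow_neg (by positivity), Real.rpow_neg (by positivity), hq]
            norm_num
            field_simp
          have hT : 0 < 2 * |t| := by positivity
          generalize 2 * |t| = T at e1 e2 hT
          rw [e1, e2, Real.mul_rpow (by positivity) (by positivity), ← Real.rpow_mul (by positivity),
            ← Real.rpow_mul (by positivity), mul_pow, ← Real.rpow_natCast, ← Real.rpow_natCast,
            ← Real.rpow_mul (by positivity), ← Real.rpow_mul (by positivity)]
          have h4 : (1 / 4 : ℝ) = 2 ^ (-2 : ℝ) := by
            rw [Real.rpow_neg (by positivity)]; norm_num
          rw [h4]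
          calc _ = (T ^ (-((a + 1) / 2) * ((2:ℕ):ℝ)) * T ^ (-2 * -((a + 1) / 2))) * ((2:ℝ) ^ ((1 - a) / 2 * ((2:ℕ):ℝ)) * (2 ^ (-2:ℝ) *
              2 ^ (-2 * -((a + 1) / 2)))) := by ring
            _ = 1 := by
              rw [← Real.rpow_add hT, ← Real.rpow_add two_pos, ← Real.rpow_add two_pos]
              have h5 : -((a + 1) / 2) * ((2:ℕ):ℝ) + -2 * -((a + 1) / 2) = 0 := by push_cast; ring
              have h6 : (1 - a) / 2 * ((2:ℕ):ℝ) + (-2 + -2 * -((a + 1) / 2)) = 0 := by push_cast; ring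
              rw [h5, h6]; simp


lemma lint_rpow {r D : ℝ} (hr : 2 < r) (hD : 0 ≤ D) :
    ∫⁻ s in Set.Ioc 0 D, ENNReal.ofReal (s ^ (r - 3)) = ENNReal.ofReal (D ^ (r - 2) / (r - 2)) := by
  have hi : IntegrableOn (fun s : ℝ => s ^ (r - 3)) (Set.Ioc 0 D) := by
    rw [← intervalIntegrable_iff_integrableOn_Ioc_of_le hD]
    exact intervalIntegral.intervalIntegrable_rpow' (by linarith)
  rw [← ofReal_integral_eq_lintegral_ofReal hi]
  · rw [← intervalIntegral.integral_of_le hD, integral_rpow (Or.inl (by linarith))]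
    rw [Real.zero_rpow (by linarith), sub_zero]
    rw [show r - 3 + 1 = r - 2 by ring]
  · exact ae_restrict_of_forall_mem measurableSet_Ioc fun s hs => Real.rpow_nonneg hs.1.le _

section
variable {α : Type*} [MeasurableSpace α] {μ : Measure α} [SFinite μ] {k : α → α → ℂ} {B : ℝ}
    {g : ℕ → α → ℝ}

lemma GoodK.level (h : GoodK μ k 1 B g) (hB : 0 < B) {f : α → ℂ} (hf : Measurable f) (hfi : Integrable f μ)
    {r n : ℝ} (hr : 2 < r) (hn : 0 < n) (hN : ∫⁻ y, ‖f y‖ₑ ^ (r / (r - 1)) ∂μ = ENNReal.ofReal n)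
    {s : ℝ} (hs : 0 < s) :
    μ {x | s < ‖∫ y, k x y * f y ∂μ‖} * ENNReal.ofReal (s ^ (r - 1)) ≤
      4 * ∫⁻ y, ENNReal.ofReal (s ^ (r - 3)) *
        (if ‖f y‖ ≤ (2 * B * n / s) ^ (r - 1) then ‖f y‖ₑ ^ 2 else 0) ∂μ := by
  set l : ℝ := (2 * B * n / s) ^ (r - 1) with hl
  have hl0 : 0 < l := by positivity
  set S : Set α := {y | ‖f y‖ ≤ l} with hS
  have hSm : MeasurableSet S := measurableSet_le hf.norm measurable_const
  set f1 : α → ℂ := Sᶜ.indicator f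
  set f2 : α → ℂ := S.indicator f
  have hf2 : Measurable f2 := hf.indicator hSm
  have hfi1 : Integrable f1 μ := hfi.indicator hSm.compl
  have hfi2 : Integrable f2 μ := hfi.indicator hSm
  have hsum : ∀ x, ∫ y, k x y * f y ∂μ = ∫ y, k x y * f1 y ∂μ + ∫ y, k x y * f2 y ∂μ := by
    intro x
    rw [← integral_add (h.kf_int hfi1 x) (h.kf_int hfi2 x)]
    congr 1; funext y
    rw [← mul_add]
    congr 1
    have := congrFun (Set.indicator_compl_add_self S f) y
    exact this.symm
  have hr1 : 0 < r - 1 := by linarith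
  have h1 : ∀ x, ‖∫ y, k x y * f1 y ∂μ‖ ≤ s / 2 := by
    intro x
    have hA : ∫⁻ y, ‖f1 y‖ₑ ∂μ ≤ ENNReal.ofReal (l ^ (-(1 / (r - 1)))) * ENNReal.ofReal n := by
      rw [← hN, ← lintegral_const_mul' _ _ ENNReal.ofReal_ne_top]
      refine lintegral_mono fun y => ?_
      by_cases hy : y ∈ S
      · simp [f1, hy]
      · have hy' : l < ‖f y‖ := not_le.1 hy
        have hy0 : 0 < ‖f y‖ := hl0.trans hy'
        simp only [f1, Set.indicator_of_mem (show y ∈ Sᶜ from hy)]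
        rw [← ofReal_norm, ENNReal.ofReal_rpow_of_pos hy0, ← ENNReal.ofReal_mul (by positivity)]
        refine ENNReal.ofReal_le_ofReal ?_
        have e : r / (r - 1) = 1 + 1 / (r - 1) := by field_simp; ring
        rw [e, Real.rpow_add hy0, Real.rpow_one, Real.rpow_neg hl0.le]
        have : l ^ (1 / (r - 1)) ≤ ‖f y‖ ^ (1 / (r - 1)) := Real.rpow_le_rpow hl0.le hy'.le (by positivity)
        have hp : 0 < l ^ (1 / (r - 1)) := by positivity
        rw [inv_mul_eq_div, le_div_iff₀ hp]
        gcongr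
    have hB2 := (h.sup f1 x).trans (mul_le_mul_right hA (ENNReal.ofReal B))
    rw [← ENNReal.ofReal_mul (by positivity), ← ENNReal.ofReal_mul hB.le, ← ofReal_norm,
      ENNReal.ofReal_le_ofReal_iff (by positivity)] at hB2
    refine hB2.trans (le_of_eq ?_)
    rw [hl, ← Real.rpow_mul (by positivity), show (r - 1) * -(1 / (r - 1)) = -1 by field_simp,
      Real.rpow_neg_one]
    field_simp
  have hsub : {x | s < ‖∫ y, k x y * f y ∂μ‖} ⊆ {x | ENNReal.ofReal ((s / 2) ^ 2) ≤ ‖∫ y, k x y * f2 y ∂μ‖ₑ ^ 2} := by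
    intro x hx
    have hx' : s < ‖∫ y, k x y * f y ∂μ‖ := hx
    rw [hsum x] at hx'
    have h3 := norm_add_le (∫ y, k x y * f1 y ∂μ) (∫ y, k x y * f2 y ∂μ)
    have h4 := h1 x
    have h5 : s / 2 ≤ ‖∫ y, k x y * f2 y ∂μ‖ := by linarith
    simp only [Set.mem_ofPred_eq]
    rw [← ofReal_norm, ← ENNReal.ofReal_pow (norm_nonneg _)]
    exact ENNReal.ofReal_le_ofReal (by gcongr)
  have hcheb := (mul_meas_ge_le_lintegral₀ (μ := μ) (((h.T_sm hf2).enorm.pow_const 2).aemeasurable)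
    (ENNReal.ofReal ((s / 2) ^ 2))).trans (h.l2 hf2 hfi2)
  have e2 : ENNReal.ofReal (s ^ (r - 1)) = ENNReal.ofReal (4 * s ^ (r - 3)) * ENNReal.ofReal ((s / 2) ^ 2) := by
    rw [← ENNReal.ofReal_mul (by positivity)]
    congr 1
    rw [show r - 1 = (r - 3) + 2 by ring, Real.rpow_add hs, Real.rpow_two]
    ring
  calc _ ≤ μ {x | ENNReal.ofReal ((s / 2) ^ 2) ≤ ‖∫ y, k x y * f2 y ∂μ‖ₑ ^ 2} * ENNReal.ofReal (s ^ (r - 1)) := by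
        gcongr
    _ = ENNReal.ofReal (4 * s ^ (r - 3)) * (ENNReal.ofReal ((s / 2) ^ 2) *
        μ {x | ENNReal.ofReal ((s / 2) ^ 2) ≤ ‖∫ y, k x y * f2 y ∂μ‖ₑ ^ 2}) := by
        rw [e2]; ring
    _ ≤ ENNReal.ofReal (4 * s ^ (r - 3)) * (1 * ∫⁻ y, ‖f2 y‖ₑ ^ 2 ∂μ) := by gcongr
    _ = _ := by
        rw [ENNReal.ofReal_mul (by norm_num), one_mul, mul_assoc, lintegral_const_mul' _ _ ENNReal.ofReal_ne_top]
        congr 1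
        · norm_num
        · congr 1
          refine lintegral_congr fun y => ?_
          by_cases hy : ‖f y‖ ≤ l
          · simp [f2, hS, hy]
          · simp [f2, hS, hy]

lemma GoodK.lr (h : GoodK μ k 1 B g) (hB : 0 < B) {f : α → ℂ} (hf : Measurable f) (hfi : Integrable f μ)
    {r n : ℝ} (hr : 2 < r) (hn : 0 < n) (hN : ∫⁻ y, ‖f y‖ₑ ^ (r / (r - 1)) ∂μ = ENNReal.ofReal n) :
    ∫⁻ x, ‖∫ y, k x y * f y ∂μ‖ₑ ^ r ∂μ ≤
      ENNReal.ofReal (4 * r / (r - 2) * (2 * B * n) ^ (r - 2) * n) := by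
  have hr1 : 0 < r - 1 := by linarith
  have hr2 : 0 < r - 2 := by linarith
  set A := 2 * B * n with hA
  have hA0 : 0 < A := by positivity
  have e1 : ∀ x, ‖∫ y, k x y * f y ∂μ‖ₑ ^ r = ENNReal.ofReal (‖∫ y, k x y * f y ∂μ‖ ^ r) := by
    intro x
    rw [← ofReal_norm, ENNReal.ofReal_rpow_of_nonneg (norm_nonneg _) (by linarith)]
  rw [lintegral_congr e1, lintegral_rpow_eq_lintegral_meas_lt_mul μ (ae_of_all _ fun _ => norm_nonneg _)
    (h.T_sm hf).norm.measurable.aemeasurable (by linarith)]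
  have hmeas : Measurable (Function.uncurry fun (s : ℝ) (y : α) => ENNReal.ofReal (s ^ (r - 3)) *
        (if ‖f y‖ ≤ (A / s) ^ (r - 1) then ‖f y‖ₑ ^ 2 else 0)) := by
    have hf' : Measurable (fun p : ℝ × α => f p.2) := hf.comp measurable_snd
    refine Measurable.mul (by fun_prop) (Measurable.ite ?_ (hf'.enorm.pow_const 2) measurable_const)
    exact measurableSet_le hf'.norm (by fun_prop)
  have e2 : ∫⁻ s in Set.Ioi (0 : ℝ), μ {x | s < ‖∫ y, k x y * f y ∂μ‖} * ENNReal.ofReal (s ^ (r - 1)) ≤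
      4 * (ENNReal.ofReal (A ^ (r - 2) / (r - 2)) * ENNReal.ofReal n) := by
    calc _ ≤ ∫⁻ s in Set.Ioi (0 : ℝ), 4 * ∫⁻ y, ENNReal.ofReal (s ^ (r - 3)) *
          (if ‖f y‖ ≤ (A / s) ^ (r - 1) then ‖f y‖ₑ ^ 2 else 0) ∂μ := by
          refine lintegral_mono_ae (ae_restrict_of_forall_mem measurableSet_Ioi fun s hs => ?_)
          exact h.level hB hf hfi hr hn hN hs
      _ = 4 * ∫⁻ y, (∫⁻ s in Set.Ioi (0 : ℝ), ENNReal.ofReal (s ^ (r - 3)) *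
          (if ‖f y‖ ≤ (A / s) ^ (r - 1) then ‖f y‖ₑ ^ 2 else 0)) ∂μ := by
          rw [lintegral_const_mul' _ _ (by norm_num), lintegral_lintegral_swap hmeas.aemeasurable]
      _ ≤ 4 * ∫⁻ y, ENNReal.ofReal (A ^ (r - 2) / (r - 2)) * ‖f y‖ₑ ^ (r / (r - 1)) ∂μ := by
          gcongr with y
          by_cases hy : f y = 0
          · simp [hy]
          have hy0 : 0 < ‖f y‖ := norm_pos_iff.2 hy
          set D := A * ‖f y‖ ^ (-(1 / (r - 1))) with hD
          have hD0 : 0 < D := by positivity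
          calc _ ≤ ∫⁻ s in Set.Ioi (0 : ℝ), (Set.Ioc 0 D).indicator
                (fun s => ENNReal.ofReal (s ^ (r - 3)) * ‖f y‖ₑ ^ 2) s := by
                refine lintegral_mono_ae (ae_restrict_of_forall_mem measurableSet_Ioi fun s hs => ?_)
                have hs0 : 0 < s := hs
                split_ifs with hc
                · have : s ≤ D := by
                    have h1 := Real.rpow_le_rpow hy0.le hc (z := 1 / (r - 1)) (by positivity)
                    rw [← Real.rpow_mul (by positivity), mul_one_div_cancel hr1.ne', Real.rpow_one,
                      le_div_iff₀ hs0] at h1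
                    rw [hD, Real.rpow_neg hy0.le, ← div_eq_mul_inv, le_div_iff₀ (by positivity)]
                    linarith
                  rw [Set.indicator_of_mem (show s ∈ Set.Ioc 0 D from ⟨hs0, this⟩)]
                · simp
            _ ≤ ∫⁻ s, (Set.Ioc 0 D).indicator
                (fun s => ENNReal.ofReal (s ^ (r - 3)) * ‖f y‖ₑ ^ 2) s := setLIntegral_le_lintegral _ _
            _ = ENNReal.ofReal (D ^ (r - 2) / (r - 2)) * ‖f y‖ₑ ^ 2 := by
                rw [lintegral_indicator measurableSet_Ioc, lintegral_mul_const' _ _ (by simp), lint_rpow hr hD0.le]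
            _ = _ := by
                rw [← ofReal_norm, ENNReal.ofReal_rpow_of_pos hy0, ← ENNReal.ofReal_pow hy0.le,
                  ← ENNReal.ofReal_mul (by positivity), ← ENNReal.ofReal_mul (by positivity)]
                congr 1
                rw [hD, Real.mul_rpow hA0.le (by positivity), ← Real.rpow_mul hy0.le, ← Real.rpow_two]
                have : ‖f y‖ ^ (r / (r - 1)) = ‖f y‖ ^ (-(1 / (r - 1)) * (r - 2)) * ‖f y‖ ^ (2 : ℝ) := by
                  rw [← Real.rpow_add hy0]
                  congr 1
                  field_simp
                  ring
                rw [this]; ring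
      _ = _ := by rw [lintegral_const_mul' _ _ ENNReal.ofReal_ne_top, hN]
  calc _ ≤ ENNReal.ofReal r * (4 * (ENNReal.ofReal (A ^ (r - 2) / (r - 2)) * ENNReal.ofReal n)) := by gcongr
    _ = _ := by
      rw [show (4 : ℝ≥0∞) = ENNReal.ofReal 4 by norm_num, ← ENNReal.ofReal_mul (by positivity),
        ← ENNReal.ofReal_mul (by positivity), ← ENNReal.ofReal_mul (by linarith)]
      congr 1
      ring

/-- constant in the interpolation -/
def Cint (r : ℝ) : ℝ := (4 * r / (r - 2) * 2 ^ (r - 2)) ^ (1 / r)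

lemma GoodK.lr' (h : GoodK μ k 1 B g) (hB : 0 < B) {f : α → ℂ} (hf : Measurable f) (hfi : Integrable f μ)
    {r : ℝ} (hr : 2 < r) :
    (∫⁻ x, ‖∫ y, k x y * f y ∂μ‖ₑ ^ r ∂μ) ^ (1 / r) ≤
      ENNReal.ofReal (Cint r * B ^ (1 - 2 / r)) * (∫⁻ y, ‖f y‖ₑ ^ (r / (r - 1)) ∂μ) ^ (1 / (r / (r - 1))) := by
  have hr0 : 0 < r := by linarith
  have hr1 : 0 < r - 1 := by linarith
  have hr2 : 0 < r - 2 := by linarith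
  have hC : 0 < Cint r := by unfold Cint; positivity
  by_cases hN0 : ∫⁻ y, ‖f y‖ₑ ^ (r / (r - 1)) ∂μ = 0
  · rw [lintegral_eq_zero_iff (hf.enorm.pow_const _)] at hN0
    have hf0 : f =ᵐ[μ] 0 := by
      filter_upwards [hN0] with y hy
      have hp : 0 < r / (r - 1) := by positivity
      simp only [Pi.zero_apply] at hy
      rw [ENNReal.rpow_eq_zero_iff_of_pos hp] at hy
      simpa using hy
    have : ∀ x, ∫ y, k x y * f y ∂μ = 0 := by
      intro x
      rw [integral_eq_zero_of_ae]
      filter_upwards [hf0] with y hy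
      simp [hy]
    simp [this, hr0]
  by_cases hNt : ∫⁻ y, ‖f y‖ₑ ^ (r / (r - 1)) ∂μ = ∞
  · rw [hNt, ENNReal.top_rpow_of_pos (by positivity), ENNReal.mul_top]
    · exact le_top
    · simp only [ne_eq, ENNReal.ofReal_eq_zero, not_le]; positivity
  obtain ⟨n, hn, hN⟩ : ∃ n : ℝ, 0 < n ∧ ∫⁻ y, ‖f y‖ₑ ^ (r / (r - 1)) ∂μ = ENNReal.ofReal n :=
    ⟨_, ENNReal.toReal_pos hN0 hNt, (ENNReal.ofReal_toReal hNt).symm⟩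
  refine (ENNReal.rpow_le_rpow (h.lr hB hf hfi hr hn hN) (by positivity)).trans (le_of_eq ?_)
  rw [hN, ENNReal.ofReal_rpow_of_pos (by positivity), ENNReal.ofReal_rpow_of_pos hn,
    ← ENNReal.ofReal_mul (by positivity)]
  congr 1
  have hK : 0 < 4 * r / (r - 2) * 2 ^ (r - 2) := by positivity
  have e : 4 * r / (r - 2) * (2 * B * n) ^ (r - 2) * n =
    (4 * r / (r - 2) * 2 ^ (r - 2)) * (B ^ (r - 2) * n ^ (r - 1)) := by
      rw [Real.mul_rpow (by positivity) hn.le, Real.mul_rpow (by positivity) hB.le,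
        show r - 1 = (r - 2) + 1 by ring, Real.rpow_add hn, Real.rpow_one]
      ring
  rw [Cint, e]
  generalize 4 * r / (r - 2) * 2 ^ (r - 2) = K at hK
  rw [Real.mul_rpow hK.le (by positivity), Real.mul_rpow (by positivity) (by positivity),
      ← Real.rpow_mul hB.le, ← Real.rpow_mul hn.le, mul_assoc]
  congr 2
  · congr 1; field_simp
  · congr 1; field_simp
end


lemma temperate_z (a : ℝ) (ha : 0 ≤ a) : ∃ n : ℕ, Integrable (fun z : ℝ => (1 + ‖z‖) ^ (-(n : ℝ))) (μz a) := by
  obtain ⟨n, hn⟩ := exists_nat_gt (a + 1)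
  refine ⟨n, ?_⟩
  unfold μz
  rw [integrable_withDensity_iff (by fun_prop) (ae_of_all _ fun _ => ENNReal.ofReal_lt_top)]
  have h1 : Integrable (fun z : ℝ => (1 + ‖z‖) ^ (-((n : ℝ) - a))) :=
    integrable_one_add_norm (by simp; linarith)
  refine Integrable.mono' h1.integrableOn (Measurable.aestronglyMeasurable (by fun_prop)) ?_
  refine ae_restrict_of_forall_mem measurableSet_Ioi fun z hz => ?_
  have hz0 : 0 < z := hz
  rw [ENNReal.toReal_ofReal (by positivity), Real.norm_of_nonneg (by positivity), Real.norm_of_nonneg hz0.le,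
    show (-((n : ℝ) - a)) = -n + a by ring, Real.rpow_add (by positivity)]
  gcongr
  linarith

lemma ωa_eq (d : ℕ) (a : ℝ) : ωa d a = (volume : Measure (Fin d → ℝ)).prod (μz a) := rfl

lemma temperate_ω (d : ℕ) (a : ℝ) (ha : 0 ≤ a) : (ωa d a).HasTemperateGrowth := by
  obtain ⟨n, hn⟩ := temperate_z a ha
  have h1 : Integrable (fun x : Fin d → ℝ => (1 + ‖x‖) ^ (-((d + 1 : ℕ) : ℝ))) :=
    integrable_one_add_norm (by simp)
  refine ⟨⟨(d + 1) + n, ?_⟩⟩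
  have h2 := h1.mul_prod hn
  rw [ωa_eq]
  refine h2.mono' (Measurable.aestronglyMeasurable (by fun_prop)) (ae_of_all _ fun X => ?_)
  rw [Real.norm_of_nonneg (by positivity), Nat.cast_add, neg_add, Real.rpow_add (by positivity)]
  gcongr ?_ * ?_
  · refine Real.rpow_le_rpow_of_nonpos (by positivity) ?_ (by simp; linarith)
    gcongr; exact norm_fst_le X
  · refine Real.rpow_le_rpow_of_nonpos (by positivity) ?_ (by simp)
    gcongr; exact norm_snd_le X

lemma schwartz_int (d : ℕ) (a : ℝ) (ha : 0 ≤ a) (F : SchwartzMap ((Fin d → ℝ) × ℝ) ℂ) :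
    Integrable F (ωa d a) := by
  haveI := temperate_ω d a ha
  exact F.integrable

lemma ωa_pos (d : ℕ) (a : ℝ) : ∀ᵐ X ∂(ωa d a), 0 < X.2 := by
  rw [ωa_eq]
  have : ∀ᵐ z ∂(μz a), 0 < z :=
    (withDensity_absolutelyContinuous _ _).ae_le (ae_restrict_of_forall_mem measurableSet_Ioi fun z hz => hz)
  exact Measure.quasiMeasurePreserving_snd.ae this

lemma SK_op_eq (d : ℕ) (a t : ℝ) (ht : t ≠ 0) (F : (Fin d → ℝ) × ℝ → ℂ) :
    (fun X => ∫ Y, SK d a X Y t * F Y ∂(ωa d a)) =ᵐ[ωa d a]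
    fun X => ∫ Y, (Sfree d X.1 Y.1 t * kz a t X.2 Y.2) * F Y ∂(ωa d a) := by
  filter_upwards [ωa_pos d a] with X hX
  refine integral_congr_ae ?_
  filter_upwards [ωa_pos d a] with Y hY
  rw [SK, SaK_eq_kz ht hX hY, mul_comm (kz a t X.2 Y.2)]

/-- constant for the sup bound -/
def C0 (d : ℕ) (a : ℝ) : ℝ :=
  (4 * Real.pi) ^ (-(d : ℝ) / 2) * ((2 ^ ((a + 1) / 2))⁻¹ * (2 : ℝ) ^ ((1 - a) / 2) * (1 / Real.Gamma ((a + 1) / 2)))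

lemma C0_pos (d : ℕ) (a : ℝ) (ha : 0 ≤ a) : 0 < C0 d a := by
  have := Real.Gamma_pos_of_pos (show 0 < (a + 1) / 2 by linarith)
  have := Real.pi_pos
  unfold C0
  positivity

lemma B_eq (d : ℕ) (a t : ℝ) (ht : t ≠ 0) :
    (4 * Real.pi * |t|) ^ (-(d : ℝ) / 2) *
      (((2 * |t|) ^ ((a + 1) / 2))⁻¹ * (2 : ℝ) ^ ((1 - a) / 2) * (1 / Real.Gamma ((a + 1) / 2))) =
    C0 d a * |t| ^ (-(((d : ℝ) + a + 1) / 2)) := by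
  have ht2 : 0 < |t| := abs_pos.2 ht
  have := Real.pi_pos
  rw [Real.mul_rpow (by positivity) ht2.le, Real.mul_rpow (by positivity) ht2.le,
    show -(((d : ℝ) + a + 1) / 2) = -(d : ℝ) / 2 + -((a + 1) / 2) by ring, Real.rpow_add ht2,
    Real.rpow_neg ht2.le ((a + 1) / 2), mul_inv, C0]
  ring

lemma goodK_full (d : ℕ) (a t : ℝ) (ha : 0 ≤ a) (ht : t ≠ 0) : ∃ g,
    GoodK (ωa d a) (fun X Y => Sfree d X.1 Y.1 t * kz a t X.2 Y.2) 1 (C0 d a * |t| ^ (-(((d : ℝ) + a + 1) / 2))) g := by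
  have h := (goodK_free d t ht).prod (goodK_z a t ha ht)
  rw [B_eq d a t ht, one_mul] at h
  exact ⟨_, h⟩

instance (d : ℕ) (a : ℝ) : SFinite (ωa d a) := by rw [ωa_eq]; infer_instance

/-- Dispersive estimate for the half-space propagator, `a ≥ 0`,
`2 ≤ r ≤ ∞` (with `r'` the Hölder conjugate of `r`): for `t ≠ 0` and Schwartz `F`,
`‖𝕊_a(t)F‖_{L^r_a} ≤ C |t|^{-(d+a+1)(1/2 − 1/r)} ‖F‖_{L^{r'}_a}`. -/
theorem dispersive_estimate_halfspace
    (d : ℕ) (hd : 1 ≤ d) (a : ℝ) (ha : 0 ≤ a) (r r' : ℝ≥0∞) (hr : 2 ≤ r)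
    (hconj : 1 / r + 1 / r' = 1) :
    ∃ C > (0 : ℝ), ∀ t : ℝ, t ≠ 0 → ∀ F : SchwartzMap ((Fin d → ℝ) × ℝ) ℂ,
      eLpNorm (fun X => ∫ Y, SK d a X Y t * F Y ∂(ωa d a)) r (ωa d a)
        ≤ ENNReal.ofReal
            (C * |t| ^ (-(((d : ℝ) + a + 1) * (1 / 2 - (1 / r).toReal)))) *
          eLpNorm (fun Y => F Y) r' (ωa d a) := by
  have hC0 := C0_pos d a ha
  by_cases hrt : r = ∞
  · subst hrt
    have hr' : r' = 1 := by
      simp only [one_div, ENNReal.inv_top, zero_add] at hconj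
      simpa using hconj
    subst hr'
    refine ⟨C0 d a, hC0, fun t ht F => ?_⟩
    obtain ⟨g, hg⟩ := goodK_full d a t ha ht
    rw [eLpNorm_congr_ae (SK_op_eq d a t ht F), eLpNorm_exponent_top, eLpNorm_one_eq_lintegral_enorm]
    refine eLpNormEssSup_le_of_ae_enorm_bound (ae_of_all _ fun X => ?_)
    refine (hg.sup F X).trans (le_of_eq ?_)
    congr 4
    simp
    ring
  by_cases hr2 : r = 2
  · subst hr2
    have hr' : r' = 2 := by
      have h2 : (1 / 2 : ℝ≥0∞) + 1 / r' = 1 / 2 + 1 / 2 := by rw [hconj, ENNReal.add_halves]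
      have h3 := (ENNReal.add_right_inj (by norm_num)).1 h2
      simpa using h3
    subst hr'
    refine ⟨1, one_pos, fun t ht F => ?_⟩
    obtain ⟨g, hg⟩ := goodK_full d a t ha ht
    have hl := hg.l2 F.continuous.measurable (schwartz_int d a ha F)
    rw [eLpNorm_congr_ae (SK_op_eq d a t ht F), eLpNorm_eq_lintegral_rpow_enorm_toReal (by norm_num) (by norm_num),
      eLpNorm_eq_lintegral_rpow_enorm_toReal (by norm_num) (by norm_num)]
    simp only [ENNReal.toReal_ofNat, ENNReal.rpow_two, one_div, ENNReal.toReal_inv, sub_self, mul_zero, neg_zero,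
      Real.rpow_zero, mul_one, ENNReal.ofReal_one, one_mul]
    refine ENNReal.rpow_le_rpow ?_ (by norm_num)
    simpa using hl
  · have h0 : r ≠ 0 := fun h => by simp [h] at hr
    set ρ := r.toReal with hρ
    have hρ2 : 2 < ρ := by
      have h2 : (2 : ℝ≥0∞) < r := lt_of_le_of_ne hr (Ne.symm hr2)
      have := (ENNReal.toReal_lt_toReal (by norm_num) hrt).2 h2
      simpa using this
    have hr'e : r'.toReal = ρ / (ρ - 1) ∧ r' ≠ 0 ∧ r' ≠ ∞ := by
      have hr'0 : r' ≠ 0 := by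
        rintro rfl
        simp at hconj
      have hr't : r' ≠ ∞ := by
        rintro rfl
        simp only [one_div, ENNReal.inv_top, add_zero] at hconj
        have : r = 1 := by simpa using hconj
        rw [this] at hr
        norm_num at hr
      refine ⟨?_, hr'0, hr't⟩
      have h4 := congrArg ENNReal.toReal hconj
      rw [ENNReal.toReal_add (by simpa using h0) (by simpa using hr'0)] at h4
      simp only [one_div, ENNReal.toReal_inv, ENNReal.toReal_one, ← hρ] at h4
      have h5 : 0 < r'.toReal := ENNReal.toReal_pos hr'0 hr't
      have h6 : ρ - 1 ≠ 0 := by linarith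
      have h7 : ρ ≠ 0 := by linarith
      field_simp at h4 ⊢
      linarith
    obtain ⟨hr'1, hr'0, hr't⟩ := hr'e
    have hC : 0 < Cint ρ := by
      have : 0 < ρ - 2 := by linarith
      unfold Cint; positivity
    refine ⟨Cint ρ * C0 d a ^ (1 - 2 / ρ), by positivity, fun t ht F => ?_⟩
    obtain ⟨g, hg⟩ := goodK_full d a t ha ht
    have ht2 : 0 < |t| := abs_pos.2 ht
    have hl := hg.lr' (by positivity) F.continuous.measurable (schwartz_int d a ha F) hρ2
    rw [eLpNorm_congr_ae (SK_op_eq d a t ht F), eLpNorm_eq_lintegral_rpow_enorm_toReal h0 hrt,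
      eLpNorm_eq_lintegral_rpow_enorm_toReal hr'0 hr't, hr'1, ← hρ]
    refine hl.trans (le_of_eq ?_)
    congr 2
    rw [Real.mul_rpow hC0.le (by positivity), ← Real.rpow_mul ht2.le, mul_assoc]
    congr 3
    simp only [one_div, ENNReal.toReal_inv, ← hρ]
    ring

end
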